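/- arXiv:1812.01451 — 3 statements merged into one kernel-verified Lean document; each statement's English description precedes it below -/
import Mathlib

section
/- Let γ > -5 and Λ > 0. For all multi-indices α, λ, κ ∈ ℕ³, the expansion coefficient A_α^{λ,κ} := (1/α!) ∫_{ℝ³} H^α(v) ∇_v·∫_{ℝ³} A(v−v*) ( H^λ(v*)M(v*) ∇_v(H^κ(v)M(v)) − H^λ(v)M(v) ∇_{v*}(H^κ(v*)M(v*)) ) dv* dv of the Fokker-Planck-Landau collision operator satisfies the explicit formula A_α^{λ,κ} = 2^{(γ+3−|α|)/2} Σ_{s,t=1}^{3} Σ_{|p|=0}^{|α|−1} (Λ / q^{[s]}!) ( a_{p, r^{[t]}}^{κ+e_t, λ} − a_{p, r^{[t]}}^{λ, κ+e_t} ) B_{r^{[t]}}^{q^{[s]}}(γ, s, t), where q^{[s]} = α − e_s − p, r^{[t]} = λ + κ + e_t − p, e_s is the s-th unit multi-index, the sums are taken only over those p, s, t for which every component of q^{[s]} and r^{[t]} is nonnegative, a_{p,q}^{λ,κ} = ∏_{i=1}^3 a_{p_i q_i}^{λ_i κ_i}, and B_p^q(γ,s,t) = −G_{st}(γ,p,q)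 + δ_{st} Σ_{r=1}^3 G_{rr}(γ,p,q). -/
open MeasureTheory Real
open scoped BigOperators Classical

noncomputable section

/-- Velocity space ℝ³. -/
abbrev V3 := Fin 3 → ℝ

/-- Euclidean norm |v| on ℝ³. -/
def nrm (v : V3) : ℝ := Real.sqrt (∑ i, v i ^ 2)

/-- The (normalized) Maxwellian M(v) = (2π)^{-3/2} exp(-|v|²/2). -/
def Mxw (v : V3) : ℝ := (2 * π) ^ (-(3 : ℝ) / 2) * Real.exp (-(∑ i, v i ^ 2) / 2)

/-- |α| = α₁ + α₂ + α₃ for a multi-index. -/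
def degIdx (α : Fin 3 → ℕ) : ℕ := α 0 + α 1 + α 2

/-- α! = α₁! α₂! α₃! for a multi-index. -/
def multiFact (α : Fin 3 → ℕ) : ℕ := (α 0).factorial * (α 1).factorial * (α 2).factorial

/-- Multidimensional Hermite polynomial
`H^α(v) = ((-1)^{|α|}/M(v)) ∂^{|α|} M(v) / ∂v₁^{α₁} ∂v₂^{α₂} ∂v₃^{α₃}`. -/
def Herm (α : Fin 3 → ℕ) (v : V3) : ℝ :=
  ((-1 : ℝ) ^ degIdx α / Mxw v) *
    iteratedDeriv (α 0) (fun x1 =>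
      iteratedDeriv (α 1) (fun x2 =>
        iteratedDeriv (α 2) (fun x3 => Mxw ![x1, x2, x3]) (v 2)) (v 1)) (v 0)

/-- Partial derivative ∂f/∂vᵢ. -/
def pd (i : Fin 3) (f : V3 → ℝ) (v : V3) : ℝ := fderiv ℝ f v (Pi.single i 1)

/-- Divergence of a vector field on ℝ³. -/
def div3 (F : V3 → V3) (v : V3) : ℝ := ∑ i, pd i (fun w => F w i) v

/-- Collision kernel matrix A(v) = Λ|v|^{γ+2} Π(v), Π_{ij}(v) = δ_{ij} - vᵢvⱼ/|v|². -/
def Aker (Λ γ : ℝ) (v : V3) (i j : Fin 3) : ℝ :=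
  Λ * nrm v ^ (γ + 2) * ((if i = j then (1 : ℝ) else 0) - v i * v j / nrm v ^ 2)

/-- Fokker-Planck-Landau collision operator
`Q[f](v) = ∇_v · ∫ A(v-v*) (f(v*)∇_v f(v) - f(v)∇_{v*} f(v*)) dv*`. -/
def Qcol (Λ γ : ℝ) (f : V3 → ℝ) (v : V3) : ℝ :=
  div3 (fun w i =>
    ∫ w₁ : V3, ∑ j, Aker Λ γ (w - w₁) i j * (f w₁ * pd j f w - f w * pd j f w₁)) v

/-- G_{st}(γ,p,q) = ∫ |g|^γ g_s g_t H^p(g) H^q(g) M(g) dg. -/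
def Gst (γ : ℝ) (s t : Fin 3) (p q : Fin 3 → ℕ) : ℝ :=
  ∫ g : V3, nrm g ^ γ * g s * g t * Herm p g * Herm q g * Mxw g

/-- Generalized binomial coefficient C(x,k) = x(x-1)⋯(x-k+1)/k!. -/
def genBinom (x : ℝ) (k : ℕ) : ℝ := (∏ j ∈ Finset.range k, (x - j)) / k.factorial

/-- Scalar coefficient a_{pq}^{λκ}, zero unless p+q = λ+κ. -/
def aCoe (p q lam kap : ℕ) : ℝ :=
  if p + q = lam + kap then
    (2 : ℝ) ^ (-(((p : ℝ) + q) / 2)) * lam.factorial * kap.factorial *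
      ∑ s ∈ Finset.Icc (p - kap) (min p lam),
        (-1 : ℝ) ^ ((q : ℤ) - lam + s) /
          ((s.factorial * (lam - s).factorial * (p - s).factorial *
            ((q : ℤ) - lam + s).toNat.factorial : ℕ) : ℝ)
  else 0

/-- Multi-index coefficient a_{p,q}^{λ,κ} = ∏ᵢ a_{pᵢqᵢ}^{λᵢκᵢ}. -/
def aMulti (p q lam kap : Fin 3 → ℕ) : ℝ := ∏ i, aCoe (p i) (q i) (lam i) (kap i)

/-- B_p^q(γ,s,t) = -G_{st}(γ,p,q) + δ_{st} Σ_r G_{rr}(γ,p,q). -/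
def Bcoe (γ : ℝ) (s t : Fin 3) (p q : Fin 3 → ℕ) : ℝ :=
  -Gst γ s t p q + (if s = t then (1 : ℝ) else 0) * ∑ r, Gst γ r r p q

/-- The expansion coefficient A_α^{λ,κ} of the FPL collision operator. -/
def coeA (Λ γ : ℝ) (α lam kap : Fin 3 → ℕ) : ℝ :=
  (1 / (multiFact α : ℝ)) *
    ∫ v : V3, Herm α v *
      div3 (fun w i =>
        ∫ w₁ : V3, ∑ j, Aker Λ γ (w - w₁) i j *
          (Herm lam w₁ * Mxw w₁ * pd j (fun u => Herm kap u * Mxw u) w -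
            Herm lam w * Mxw w * pd j (fun u => Herm kap u * Mxw u) w₁)) v

/-- Multi-indices p with |p| < n, i.e. 0 ≤ |p| ≤ n-1. -/
def idxLt (n : ℕ) : Finset (Fin 3 → ℕ) :=
  (Fintype.piFinset (fun _ : Fin 3 => Finset.range n)).filter (fun p => degIdx p < n)

/-- Pairs of multi-indices (p,q) with p + q = σ. -/
def idxPairs (σ : Fin 3 → ℕ) : Finset ((Fin 3 → ℕ) × (Fin 3 → ℕ)) :=
  ((Fintype.piFinset fun i => Finset.range (σ i + 1)) ×ˢ
      (Fintype.piFinset fun i => Finset.range (σ i + 1))).filter fun x => x.1 + x.2 = σ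

/-- Multi-index permutation operator exchanging the i-th and j-th entries. -/
def swapIdx (i j : Fin 3) (p : Fin 3 → ℕ) : Fin 3 → ℕ := p ∘ Equiv.swap i j

/-- Associated Legendre function
`P_l^m(x) = ((-1)^m/(2^l l!)) (1-x²)^{m/2} d^{l+m}/dx^{l+m} (x²-1)^l`. -/
def assocLegendre (l : ℕ) (m : ℤ) (x : ℝ) : ℝ :=
  ((-1 : ℝ) ^ m * (1 - x ^ 2) ^ ((m : ℝ) / 2) / (2 ^ l * l.factorial)) *
    iteratedDeriv ((l : ℤ) + m).toNat (fun y => (y ^ 2 - 1) ^ l) x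

/-- Spherical harmonic Y_l^m(n), written in terms of cos θ = n₃ and φ = arg(n₁ + i n₂). -/
def sphHarm (l : ℕ) (m : ℤ) (n : V3) : ℂ :=
  ((Real.sqrt ((2 * l + 1) / (4 * π) * ((l : ℤ) - m).toNat.factorial /
      ((l : ℤ) + m).toNat.factorial) * assocLegendre l m (n 2) : ℝ) : ℂ) *
    Complex.exp (Complex.I * m * (Complex.arg ((n 0 : ℂ) + n 1 * Complex.I) : ℝ))

/-- Spherical harmonic with the convention Y_{l'}^{m'} = 0 when |m'| > l' or l' < 0. -/
def sphHarmZ (l m : ℤ) (n : V3) : ℂ :=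
  if 0 ≤ l ∧ m.natAbs ≤ l.toNat then sphHarm l.toNat m n else 0

/-- Surface integral over the unit sphere S² in spherical coordinates. -/
def sphereIntegral (F : V3 → ℂ) : ℂ :=
  ∫ θ in (0 : ℝ)..π, ∫ φ in (0 : ℝ)..(2 * π),
    F ![Real.sin θ * Real.cos φ, Real.sin θ * Real.sin φ, Real.cos θ] * (Real.sin θ : ℂ)

/-- Laguerre polynomial L_n^{(β)}(x) = (x^{-β} eˣ / n!) dⁿ/dxⁿ [x^{n+β} e^{-x}]. -/
def laguerre (n : ℕ) (β : ℝ) (x : ℝ) : ℝ :=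
  (x ^ (-β) * Real.exp x / n.factorial) *
    iteratedDeriv n (fun y => y ^ ((n : ℝ) + β) * Real.exp (-y)) x

/-- Normalized Burnett polynomial B_{α̂}(v) with α̂ = (l, m, nn). -/
def Burnett (l : ℕ) (m : ℤ) (nn : ℕ) (v : V3) : ℂ :=
  ((Real.sqrt ((2 : ℝ) ^ (1 - (l : ℝ)) * π ^ ((3 : ℝ) / 2) * nn.factorial /
        Real.Gamma (nn + l + 3 / 2)) *
      laguerre nn ((l : ℝ) + 1 / 2) (nrm v ^ 2 / 2) * nrm v ^ l : ℝ) : ℂ) *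
    sphHarm l m (fun i => v i / nrm v)

/-- Connection coefficient C_{α̂}^α = ∫ B_{α̂}(v) H^α(v) M(v) dv. -/
def coeC (l : ℕ) (m : ℤ) (nn : ℕ) (α : Fin 3 → ℕ) : ℂ :=
  ∫ v : V3, Burnett l m nn v * ((Herm α v * Mxw v : ℝ) : ℂ)

/-- Burnett indices α̂ = (α̂₁,α̂₂,α̂₃), α̂₂ ∈ {-α̂₁,…,α̂₁}, with |α̂|_B = α̂₁ + 2α̂₃ = N. -/
def burnettIdx (N : ℕ) : Finset (ℕ × ℤ × ℕ) :=
  ((Finset.range (N + 1)) ×ˢ (Finset.Icc (-(N : ℤ)) N) ×ˢ (Finset.range (N + 1))).filter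
    fun x => x.1 + 2 * x.2.2 = N ∧ x.2.1.natAbs ≤ x.1

/-- D_{n₁n₂}^{l₁l₂} = √(n₁!n₂!/(Γ(n₁+l₁+3/2)Γ(n₂+l₂+3/2))). -/
def Dcoe (n1 n2 l1 l2 : ℕ) : ℝ :=
  Real.sqrt ((n1.factorial * n2.factorial : ℝ) /
    (Real.Gamma (n1 + l1 + 3 / 2) * Real.Gamma (n2 + l2 + 3 / 2)))

/-- K(μ,α,κ,m,n) = (-1)^{m+n} Γ(μ+1) Σᵢ C(μ-α,m-i) C(μ-κ,n-i) C(i+μ,i). -/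
def Kcoe (μ a k : ℝ) (m n : ℕ) : ℝ :=
  (-1 : ℝ) ^ (m + n) * Real.Gamma (μ + 1) *
    ∑ i ∈ Finset.range (min m n + 1),
      genBinom (μ - a) (m - i) * genBinom (μ - k) (n - i) * genBinom ((i : ℝ) + μ) i

/-- F_{st}(l₁,m₁,l₂,m₂) = ∫_{S²} n_s n_t Y_{l₁}^{m₁}(n) Y_{l₂}^{m₂}(n) dn. -/
def Fst (s t : Fin 3) (l1 : ℕ) (m1 : ℤ) (l2 : ℕ) (m2 : ℤ) : ℂ :=
  sphereIntegral fun n => ((n s * n t : ℝ) : ℂ) * sphHarm l1 m1 n * sphHarm l2 m2 n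

/-- Kronecker delta on ℤ. -/
def kdZ (a b : ℤ) : ℝ := if a = b then 1 else 0

/-- η_{lm}^μ as in the paper (l, m, μ integers, μ ∈ {-1,0,1}). -/
def eta (l m μ : ℤ) : ℝ :=
  Real.sqrt ((((l : ℝ) + (2 * kdZ 1 μ - 1) * m + kdZ 1 μ) *
      ((l : ℝ) - (2 * kdZ (-1) μ - 1) * m + kdZ (-1) μ)) /
    ((2 : ℝ) ^ μ.natAbs * (2 * l - 1) * (2 * l + 1)))

/-- General Maxwellian M_{ρ,u,θ}. -/
def Mgen (ρ θ : ℝ) (u : V3) (v : V3) : ℝ :=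
  ρ / (2 * π * θ) ^ ((3 : ℝ) / 2) * Real.exp (-(nrm (v - u) ^ 2) / (2 * θ))

/-- Hermite coefficient f_α = (1/α!) ∫ H^α(v) f(v) dv. -/
def hermCoeff (f : V3 → ℝ) (α : Fin 3 → ℕ) : ℝ :=
  (1 / (multiFact α : ℝ)) * ∫ v : V3, Herm α v * f v

/-- τ(t) = 1 - 0.4 e^{-4t}. -/
def tau (t : ℝ) : ℝ := 1 - 0.4 * Real.exp (-4 * t)

/-- The BKW distribution. -/
def fBKW (t : ℝ) (v : V3) : ℝ :=
  (2 * π * tau t) ^ (-(3 : ℝ) / 2) * Real.exp (-(nrm v ^ 2) / (2 * tau t)) *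
    (1 + (1 - tau t) / tau t * (nrm v ^ 2 / (2 * tau t) - 3 / 2))


/-- One-dimensional Hermite polynomial as a real function. -/
def he (n : ℕ) (x : ℝ) : ℝ := Polynomial.aeval x (Polynomial.hermite n)

/-- Its derivative. -/
def he' (n : ℕ) (x : ℝ) : ℝ := Polynomial.aeval x (Polynomial.derivative (Polynomial.hermite n))

lemma he_zero (x : ℝ) : he 0 x = 1 := by simp [he]

lemma he_succ (n : ℕ) (x : ℝ) : he (n + 1) x = x * he n x - he' n x := by
  simp [he, he', Polynomial.hermite_succ]

lemma hasDerivAt_he (n : ℕ) (x : ℝ) : HasDerivAt (he n) (he' n x) x :=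
  (Polynomial.hermite n).hasDerivAt_aeval x

lemma hermite_deriv (n : ℕ) : Polynomial.derivative (Polynomial.hermite (n + 1)) =
    ((n : Polynomial ℤ) + 1) * Polynomial.hermite n := by
  induction n with
  | zero => simp
  | succ n ih =>
    rw [Polynomial.hermite_succ (n + 1), Polynomial.derivative_sub, Polynomial.derivative_mul, ih]
    simp only [Polynomial.derivative_X, Polynomial.derivative_mul, Polynomial.derivative_add,
      Polynomial.derivative_natCast, Polynomial.derivative_one]
    rw [Polynomial.hermite_succ n]
    push_cast
    ring

lemma he'_succ (n : ℕ) (x : ℝ) : he' (n + 1) x = (n + 1) * he n x := by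
  rw [he', hermite_deriv]; simp [he]

lemma he'_eq (n : ℕ) (x : ℝ) : he' n x = n * he (n - 1) x := by
  cases n with
  | zero => simp [he']
  | succ n => simp [he'_succ]

lemma continuous_he (n : ℕ) : Continuous (he n) := (Polynomial.hermite n).continuous_aeval

lemma differentiable_he (n : ℕ) : Differentiable ℝ (he n) :=
  fun x => (hasDerivAt_he n x).differentiableAt

lemma abs_pow_le_exp (ε : ℝ) (hε : 0 < ε) (n : ℕ) :
    ∃ C : ℝ, 0 ≤ C ∧ ∀ x : ℝ, |x ^ n| ≤ C * Real.exp (ε * x ^ 2) := by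
  refine ⟨1 + n.factorial / ε ^ n, by positivity, fun x => ?_⟩
  have h1 : (ε * x ^ 2) ^ n / n.factorial ≤ Real.exp (ε * x ^ 2) :=
    Real.pow_div_factorial_le_exp _ (by positivity) n
  have h2 : 1 ≤ Real.exp (ε * x ^ 2) := Real.one_le_exp (by positivity)
  have h3 : |x ^ n| ≤ 1 + (x ^ 2) ^ n := by
    have : (x ^ 2) ^ n = |x ^ n| ^ 2 := by rw [sq_abs]; ring
    rw [this]
    nlinarith [sq_nonneg (|x ^ n| - 1)]
  have h4 : (x ^ 2) ^ n ≤ n.factorial / ε ^ n * Real.exp (ε * x ^ 2) := by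
    rw [mul_pow, div_le_iff₀ (by positivity)] at h1
    rw [div_mul_eq_mul_div, le_div_iff₀ (by positivity)]
    linarith
  linarith

lemma poly_le_exp (ε : ℝ) (hε : 0 < ε) (P : Polynomial ℤ) :
    ∃ C : ℝ, 0 ≤ C ∧ ∀ x : ℝ, |Polynomial.aeval x P| ≤ C * Real.exp (ε * x ^ 2) := by
  induction P using Polynomial.induction_on' with
  | add p q hp hq =>
    obtain ⟨C, hC, h⟩ := hp
    obtain ⟨D, hD, h'⟩ := hq
    refine ⟨C + D, by positivity, fun x => ?_⟩
    rw [map_add, add_mul]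
    exact (abs_add_le _ _).trans (add_le_add (h x) (h' x))
  | monomial n a =>
    obtain ⟨C, hC, h⟩ := abs_pow_le_exp ε hε n
    refine ⟨|(a : ℝ)| * C, by positivity, fun x => ?_⟩
    rw [Polynomial.aeval_monomial, abs_mul, mul_assoc]
    simpa using mul_le_mul_of_nonneg_left (h x) (abs_nonneg (a : ℝ))

lemma he_le_exp (ε : ℝ) (hε : 0 < ε) (n : ℕ) :
    ∃ C : ℝ, 0 ≤ C ∧ ∀ x : ℝ, |he n x| ≤ C * Real.exp (ε * x ^ 2) := poly_le_exp ε hε _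

lemma integrable_he_gauss (m n : ℕ) :
    Integrable (fun x : ℝ => he m x * he n x * Real.exp (-(x ^ 2) / 2)) := by
  obtain ⟨C, hC, h⟩ := he_le_exp (1/8) (by norm_num) m
  obtain ⟨D, hD, h'⟩ := he_le_exp (1/8) (by norm_num) n
  refine ((integrable_exp_neg_mul_sq (b := 1/4) (by norm_num)).const_mul (C * D)).mono'
    (Continuous.aestronglyMeasurable ?_) (Filter.Eventually.of_forall fun x => ?_)
  · exact ((continuous_he m).mul (continuous_he n)).mul (by fun_prop)
  · rw [Real.norm_eq_abs, abs_mul, abs_mul, Real.abs_exp]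
    calc _ ≤ (C * Real.exp (1/8 * x ^ 2)) * (D * Real.exp (1/8 * x ^ 2)) *
          Real.exp (-(x ^ 2) / 2) := by
          gcongr
          · exact h x
          · exact h' x
      _ = C * D * (Real.exp (1/8 * x ^ 2) * Real.exp (1/8 * x ^ 2) * Real.exp (-(x ^ 2) / 2)) := by
          ring
      _ = _ := by
          rw [← Real.exp_add, ← Real.exp_add]; congr 2; ring

/-- Derivative of Hermite times Gaussian. -/
lemma hasDerivAt_he_gauss (n : ℕ) (x : ℝ) :
    HasDerivAt (fun x => he n x * Real.exp (-(x ^ 2) / 2))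
      (-(he (n + 1) x * Real.exp (-(x ^ 2) / 2))) x := by
  have h2 : HasDerivAt (fun x : ℝ => -(x ^ 2) / 2) (-x) x := by
    have := (((hasDerivAt_id x).pow 2).neg).div_const 2
    refine this.congr_deriv ?_
    simp
    ring
  refine ((hasDerivAt_he n x).mul h2.exp).congr_deriv ?_
  rw [he_succ]; ring

lemma he_rec_integral (m n : ℕ) :
    ∫ x : ℝ, he m x * he (n + 1) x * Real.exp (-(x ^ 2) / 2) =
      m * ∫ x : ℝ, he (m - 1) x * he n x * Real.exp (-(x ^ 2) / 2) := by
  have key := integral_mul_deriv_eq_deriv_mul_of_integrable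
    (u := he m) (v := fun x => he n x * Real.exp (-(x ^ 2) / 2)) (u' := he' m)
    (v' := fun x => -(he (n + 1) x * Real.exp (-(x ^ 2) / 2)))
    (fun x _ => hasDerivAt_he m x) (fun x _ => hasDerivAt_he_gauss n x)
    ?_ ?_ ?_
  · have e1 : ∀ x, he m x * -(he (n + 1) x * Real.exp (-(x ^ 2) / 2)) =
        -(he m x * he (n + 1) x * Real.exp (-(x ^ 2) / 2)) := fun x => by ring
    have e2 : ∀ x, he' m x * (he n x * Real.exp (-(x ^ 2) / 2)) =
        m * (he (m - 1) x * he n x * Real.exp (-(x ^ 2) / 2)) := fun x => by rw [he'_eq]; ring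
    simp only [e1, e2, integral_neg, integral_const_mul] at key
    linarith
  · refine (integrable_he_gauss m (n + 1)).neg.congr (Filter.Eventually.of_forall fun x => ?_)
    simp; ring
  · refine ((integrable_he_gauss (m - 1) n).const_mul (m : ℝ)).congr
      (Filter.Eventually.of_forall fun x => ?_)
    simp [he'_eq]; ring
  · refine (integrable_he_gauss m n).congr (Filter.Eventually.of_forall fun x => ?_)
    simp; ring

lemma he_orth (m n : ℕ) :
    ∫ x : ℝ, he m x * he n x * Real.exp (-(x ^ 2) / 2) =
      if m = n then (2 * π) ^ ((1:ℝ) / 2) * n.factorial else 0 := by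
  induction n generalizing m with
  | zero =>
    cases m with
    | zero =>
      simp only [he_zero, one_mul, if_true, Nat.factorial_zero, Nat.cast_one, mul_one]
      have := integral_gaussian (1/2)
      rw [← Real.sqrt_eq_rpow]
      convert this using 3
      · ring
      · ring
    | succ m =>
      have := he_rec_integral 0 m
      simp only [Nat.cast_zero, zero_mul] at this
      rw [if_neg (by simp), ← this]
      congr 1; ext x; ring
  | succ n ih =>
    rw [he_rec_integral, ih]
    cases m with
    | zero => simp
    | succ m =>
      simp only [Nat.add_sub_cancel, add_left_inj]
      split_ifs with h
      · subst h; push_cast [Nat.factorial_succ]; ring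
      · simp

open Polynomial in
/-- Generating polynomial of the coefficients. -/
def genP (l k : ℕ) : Polynomial ℝ := (X + 1) ^ l * (X - 1) ^ k

open Polynomial in
lemma genP_coeff (l k p : ℕ) : (genP l k).coeff p =
    ∑ s ∈ Finset.range (p + 1), (l.choose s : ℝ) * ((-1) ^ (k - (p - s)) * (k.choose (p - s) : ℝ)) := by
  have h : (X - 1 : Polynomial ℝ) = X + C (-1) := by simp [sub_eq_add_neg]
  rw [genP, Polynomial.coeff_mul, Finset.Nat.sum_antidiagonal_eq_sum_range_succ_mk, h]
  refine Finset.sum_congr rfl fun s _ => ?_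
  rw [Polynomial.coeff_X_add_one_pow, Polynomial.coeff_X_add_C_pow]

lemma aCoe_eq (p q l k : ℕ) (h : p + q = l + k) :
    aCoe p q l k = (2 : ℝ) ^ (-(((l : ℝ) + k) / 2)) * (genP l k).coeff p := by
  have h' : (p : ℝ) + q = l + k := by exact_mod_cast h
  rw [aCoe, if_pos h, h', genP_coeff, mul_assoc, mul_assoc, Finset.mul_sum, Finset.mul_sum]
  congr 1
  refine Finset.sum_subset_zero_on_sdiff (fun s hs => ?_) (fun s hs => ?_) (fun s hs => ?_)
  · simp only [Finset.mem_Icc, Finset.mem_range] at hs ⊢; omega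
  · simp only [Finset.mem_Icc, Finset.mem_range, Finset.mem_sdiff] at hs
    by_cases hl : l < s
    · rw [Nat.choose_eq_zero_of_lt hl]; simp
    · rw [Nat.choose_eq_zero_of_lt (show k < p - s by omega)]; simp
  · simp only [Finset.mem_Icc] at hs
    have e1 : (q : ℤ) - l + s = ((k - (p - s) : ℕ) : ℤ) := by omega
    rw [e1, Int.toNat_natCast, zpow_natCast, Nat.cast_choose ℝ (show s ≤ l by omega),
      Nat.cast_choose ℝ (show p - s ≤ k by omega)]
    push_cast
    field_simp

/-- Hermite expansion attached to a polynomial. -/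
def PhiN (N : ℕ) (T : Polynomial ℝ) (h g : ℝ) : ℝ :=
  ∑ p ∈ Finset.range (N + 1), T.coeff p * (he p h * he (N - p) g)

lemma hasDerivAt_PhiN_h (N : ℕ) (T : Polynomial ℝ) (h g : ℝ) :
    HasDerivAt (fun h => PhiN N T h g)
      (∑ p ∈ Finset.range (N + 1), T.coeff p * (he' p h * he (N - p) g)) h := by
  unfold PhiN
  exact HasDerivAt.fun_sum fun p _ => ((hasDerivAt_he p h).mul_const _).const_mul _

lemma hasDerivAt_PhiN_g (N : ℕ) (T : Polynomial ℝ) (h g : ℝ) :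
    HasDerivAt (fun g => PhiN N T h g)
      (∑ p ∈ Finset.range (N + 1), T.coeff p * (he p h * he' (N - p) g)) g := by
  unfold PhiN
  exact HasDerivAt.fun_sum fun p _ => ((hasDerivAt_he (N - p) g).const_mul _).const_mul _

open Polynomial in
lemma PhiN_step (N : ℕ) (T : Polynomial ℝ) (hT : T.natDegree ≤ N) (e h g : ℝ) :
    PhiN (N + 1) ((X + C e) * T) h g =
      (h + e * g) * PhiN N T h g -
        (∑ p ∈ Finset.range (N + 1), T.coeff p * (he' p h * he (N - p) g)) -
        e * (∑ p ∈ Finset.range (N + 1), T.coeff p * (he p h * he' (N - p) g)) := by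
  have e1 : PhiN (N + 1) ((X + C e) * T) h g =
      (∑ p ∈ Finset.range (N + 1), T.coeff p * (he (p + 1) h * he (N - p) g)) +
      e * (∑ p ∈ Finset.range (N + 1), T.coeff p * (he p h * he (N + 1 - p) g)) := by
    have a1 : ∑ p ∈ Finset.range (N + 1 + 1), (X * T).coeff p * (he p h * he (N + 1 - p) g) =
        ∑ p ∈ Finset.range (N + 1), T.coeff p * (he (p + 1) h * he (N - p) g) := by
      rw [Finset.sum_range_succ']
      simp
    have a2 : ∑ p ∈ Finset.range (N + 1 + 1), T.coeff p * (he p h * he (N + 1 - p) g) =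
        ∑ p ∈ Finset.range (N + 1), T.coeff p * (he p h * he (N + 1 - p) g) := by
      rw [Finset.sum_range_succ, Polynomial.coeff_eq_zero_of_natDegree_lt (by omega)]
      simp
    rw [← a1, ← a2, Finset.mul_sum, ← Finset.sum_add_distrib, PhiN]
    refine Finset.sum_congr rfl fun p _ => ?_
    rw [add_mul, Polynomial.coeff_add, Polynomial.coeff_C_mul]; ring
  rw [e1, PhiN, add_mul, Finset.mul_sum, mul_assoc, Finset.mul_sum, Finset.mul_sum, Finset.mul_sum,
    Finset.mul_sum, ← Finset.sum_add_distrib, ← Finset.sum_add_distrib, ← Finset.sum_sub_distrib,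
    ← Finset.sum_sub_distrib]
  refine Finset.sum_congr rfl fun p hp => ?_
  rw [Finset.mem_range] at hp
  rw [he_succ p, show N + 1 - p = (N - p) + 1 by omega, he_succ (N - p)]
  ring

lemma genP_natDegree (l k : ℕ) : (genP l k).natDegree ≤ l + k := by
  unfold genP
  refine Polynomial.natDegree_mul_le.trans (add_le_add ?_ ?_)
  · exact (Polynomial.natDegree_pow_le_of_le l (Polynomial.natDegree_X_add_C (1:ℝ)).le).trans (by simp)
  · exact (Polynomial.natDegree_pow_le_of_le k (Polynomial.natDegree_X_sub_C (1:ℝ)).le).trans (by simp)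

lemma two_rpow_step (x : ℝ) : (2 : ℝ) ^ (-((x + 1) / 2)) = (2:ℝ) ^ (-(x / 2)) * (√2)⁻¹ := by
  rw [Real.sqrt_eq_rpow, ← Real.rpow_neg (by norm_num), ← Real.rpow_add (by norm_num)]
  congr 1; ring

/-- Auxiliary step: multiply by a raising operator. -/
lemma expand_step (l k N : ℕ) (c : ℝ) (T : Polynomial ℝ) (hT : T.natDegree ≤ N) (e : ℝ)
    (IH : ∀ h g, he l ((h + g) / √2) * he k ((h - g) / √2) = c * PhiN N T h g) (h g : ℝ) :
    (h + e * g) * (he l ((h + g) / √2) * he k ((h - g) / √2)) -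
      ((1 + e) / √2 * he' l ((h + g) / √2) * he k ((h - g) / √2) +
       (1 - e) / √2 * he l ((h + g) / √2) * he' k ((h - g) / √2)) =
      c * PhiN (N + 1) ((Polynomial.X + Polynomial.C e) * T) h g := by
  have d1 : ∀ h g, HasDerivAt (fun h => (h + g) / √2) (1 / √2) h := fun h g =>
    ((hasDerivAt_id h).add_const g).div_const _
  have d2 : ∀ h g, HasDerivAt (fun h => (h - g) / √2) (1 / √2) h := fun h g =>
    ((hasDerivAt_id h).sub_const g).div_const _
  have d3 : ∀ h g, HasDerivAt (fun g => (h + g) / √2) (1 / √2) g := fun h g =>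
    ((hasDerivAt_id g).const_add h).div_const _
  have d4 : ∀ h g, HasDerivAt (fun g => (h - g) / √2) (-1 / √2) g := fun h g =>
    ((hasDerivAt_id g).const_sub h).div_const _
  have H1 := (((hasDerivAt_he l _).comp h (d1 h g)).mul ((hasDerivAt_he k _).comp h (d2 h g))).unique
    (((hasDerivAt_PhiN_h N T h g).const_mul c).congr_of_eventuallyEq
      (Filter.Eventually.of_forall fun h => by simpa using IH h g))
  have H2 := (((hasDerivAt_he l _).comp g (d3 h g)).mul ((hasDerivAt_he k _).comp g (d4 h g))).unique
    (((hasDerivAt_PhiN_g N T h g).const_mul c).congr_of_eventuallyEq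
      (Filter.Eventually.of_forall fun g => by simpa using IH h g))
  simp only [Function.comp] at H1 H2
  rw [PhiN_step N T hT, mul_sub, mul_sub, mul_left_comm c e, ← H1, ← H2, mul_left_comm c, ← IH]
  ring

lemma he_expand_genP (l k : ℕ) : ∀ h g : ℝ, he l ((h + g) / √2) * he k ((h - g) / √2) =
    (2 : ℝ) ^ (-(((l : ℝ) + k) / 2)) * PhiN (l + k) (genP l k) h g := by
  have s2 : √2 ≠ 0 := by positivity
  have s22 : √2 ^ 2 = 2 := Real.sq_sqrt (by norm_num)
  induction l with
  | zero =>
    induction k with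
    | zero => intro h g; simp [PhiN, genP, he_zero]
    | succ k ih =>
      intro h g
      have := expand_step 0 k (0 + k) _ _ (genP_natDegree 0 k) (-1) ih h g
      simp only [Nat.cast_zero] at this
      have e : genP 0 (k + 1) = (Polynomial.X + Polynomial.C (-1)) * genP 0 k := by
        simp [genP]; ring
      push_cast
      rw [e, ← add_assoc, ← add_assoc, two_rpow_step, mul_right_comm, ← this, he_succ k]
      field_simp
      linear_combination (-(he 0 ((h + g) / √2) * he' k ((h - g) / √2))) * s22
  | succ l ih =>
    intro h g
    have := expand_step l k (l + k) _ _ (genP_natDegree l k) 1 ih h g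
    have e : genP (l + 1) k = (Polynomial.X + Polynomial.C 1) * genP l k := by
      simp [genP]; ring
    push_cast
    rw [e, show l + 1 + k = l + k + 1 by ring, show (l : ℝ) + 1 + k = l + k + 1 by ring,
      two_rpow_step, mul_right_comm, ← this, he_succ l]
    field_simp
    linear_combination (-(he' l ((h + g) / √2) * he k ((h - g) / √2))) * s22

lemma he_expand (l k : ℕ) (h g : ℝ) : he l ((h + g) / √2) * he k ((h - g) / √2) =
    ∑ p ∈ Finset.range (l + k + 1), aCoe p (l + k - p) l k * (he p h * he (l + k - p) g) := by
  rw [he_expand_genP, PhiN, Finset.mul_sum]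
  refine Finset.sum_congr rfl fun p hp => ?_
  rw [Finset.mem_range] at hp
  rw [aCoe_eq _ _ _ _ (by omega)]; ring

lemma he_expand_single (l : ℕ) (h g : ℝ) : he l ((h + g) / √2) =
    ∑ p ∈ Finset.range (l + 1), ((2 : ℝ) ^ (-((l : ℝ) / 2)) * l.choose p) *
      (he p h * he (l - p) g) := by
  have := he_expand_genP l 0 h g
  rw [he_zero, mul_one] at this
  rw [this, PhiN, Finset.mul_sum]
  refine Finset.sum_congr rfl fun p hp => ?_
  simp only [genP, pow_zero, mul_one, Polynomial.coeff_X_add_one_pow]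
  simp [mul_assoc]

/-- Squared euclidean norm. -/
def sqn (v : V3) : ℝ := ∑ i, v i ^ 2

/-- Normalization constant of the Maxwellian. -/
def cM : ℝ := (2 * π) ^ (-(3 : ℝ) / 2)

lemma cM_pos : 0 < cM := by unfold cM; positivity

lemma Mxw_eq (v : V3) : Mxw v = cM * Real.exp (-(sqn v) / 2) := rfl

lemma Mxw_pos (v : V3) : 0 < Mxw v := by
  rw [Mxw_eq]; exact mul_pos cM_pos (Real.exp_pos _)

lemma sqn_nonneg (v : V3) : 0 ≤ sqn v := Finset.sum_nonneg fun _ _ => sq_nonneg _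

lemma nrm_sq (v : V3) : nrm v ^ 2 = sqn v := Real.sq_sqrt (sqn_nonneg v)

lemma nrm_nonneg (v : V3) : 0 ≤ nrm v := Real.sqrt_nonneg _

lemma continuous_sqn : Continuous sqn := by unfold sqn; fun_prop

lemma continuous_nrm : Continuous nrm := Real.continuous_sqrt.comp continuous_sqn

lemma continuous_Mxw : Continuous Mxw := by
  have := continuous_sqn
  simp only [funext Mxw_eq]
  fun_prop

lemma Mxw_prod (v : V3) : Mxw v = cM * ∏ i, Real.exp (-(v i ^ 2) / 2) := by
  rw [Mxw_eq, ← Real.exp_sum, sqn]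
  congr 2
  rw [← Finset.sum_neg_distrib, Finset.sum_div]

lemma iteratedDeriv_gauss (n : ℕ) (x : ℝ) :
    iteratedDeriv n (fun y : ℝ => Real.exp (-(y ^ 2) / 2)) x =
      (-1) ^ n * he n x * Real.exp (-(x ^ 2) / 2) := by
  have h := Polynomial.deriv_gaussian_eq_hermite_mul_gaussian n x
  rw [iteratedDeriv_eq_iterate]
  have e : (fun y : ℝ => Real.exp (-(y ^ 2) / 2)) = fun y => Real.exp (-(y ^ 2 / 2)) := by
    ext y; congr 1; ring
  rw [e, h, he]
  congr 2; ring

lemma Herm_eq (α : Fin 3 → ℕ) (v : V3) : Herm α v = ∏ i, he (α i) (v i) := by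
  have hM : Mxw v ≠ 0 := (Mxw_pos v).ne'
  have e : ∀ x1 x2 x3 : ℝ, Mxw ![x1, x2, x3] = (cM * Real.exp (-(x1 ^ 2) / 2) *
      Real.exp (-(x2 ^ 2) / 2)) * Real.exp (-(x3 ^ 2) / 2) := by
    intro x1 x2 x3
    rw [Mxw_prod, Fin.prod_univ_three]
    simp [mul_assoc]
  have e1 : ∀ x1 x2, iteratedDeriv (α 2) (fun x3 => Mxw ![x1, x2, x3]) (v 2) =
      (cM * Real.exp (-(x1 ^ 2) / 2) * ((-1) ^ α 2 * he (α 2) (v 2) * Real.exp (-(v 2 ^ 2) / 2))) *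
      Real.exp (-(x2 ^ 2) / 2) := by
    intro x1 x2
    simp only [e]
    rw [iteratedDeriv_const_mul_field, iteratedDeriv_gauss]; ring
  have e2 : ∀ x1, iteratedDeriv (α 1) (fun x2 => iteratedDeriv (α 2)
        (fun x3 => Mxw ![x1, x2, x3]) (v 2)) (v 1) =
      (cM * ((-1) ^ α 2 * he (α 2) (v 2) * Real.exp (-(v 2 ^ 2) / 2)) *
      ((-1) ^ α 1 * he (α 1) (v 1) * Real.exp (-(v 1 ^ 2) / 2))) *
      Real.exp (-(x1 ^ 2) / 2) := by
    intro x1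
    simp only [e1]
    rw [iteratedDeriv_const_mul_field, iteratedDeriv_gauss]; ring
  unfold Herm
  simp only [e2]
  rw [iteratedDeriv_const_mul_field, iteratedDeriv_gauss, Fin.prod_univ_three, degIdx, div_mul_eq_mul_div,
    div_eq_iff hM, Mxw_prod, Fin.prod_univ_three]
  have hs : ∀ n : ℕ, (-1 : ℝ) ^ n * (-1) ^ n = 1 := fun n => by
    rw [← mul_pow]; norm_num
  rw [pow_add, pow_add]
  calc _ = ((-1 : ℝ) ^ α 0 * (-1) ^ α 0) * ((-1 : ℝ) ^ α 1 * (-1) ^ α 1) *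
      ((-1 : ℝ) ^ α 2 * (-1) ^ α 2) * (he (α 0) (v 0) * he (α 1) (v 1) * he (α 2) (v 2) *
    (cM * (rexp (-v 0 ^ 2 / 2) * rexp (-v 1 ^ 2 / 2) * rexp (-v 2 ^ 2 / 2)))) := by ring
    _ = _ := by rw [hs, hs, hs]; ring

lemma continuous_Herm (α : Fin 3 → ℕ) : Continuous (Herm α) := by
  simp only [funext (Herm_eq α)]
  exact continuous_finsetProd _ fun i _ => (continuous_he _).comp (continuous_apply i)

lemma hasFDerivAt_prod3 (ψ d : Fin 3 → ℝ → ℝ) (hd : ∀ j x, HasDerivAt (ψ j) (d j x) x) (v : V3) :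
    DifferentiableAt ℝ (fun u : V3 => ∏ j, ψ j (u j)) v ∧
    ∀ i, pd i (fun u : V3 => ∏ j, ψ j (u j)) v = ∏ j, (if j = i then d j (v j) else ψ j (v j)) := by
  have h : ∀ j : Fin 3, HasFDerivAt (fun u : V3 => ψ j (u j))
      (d j (v j) • (ContinuousLinearMap.proj j : V3 →L[ℝ] ℝ)) v := fun j =>
    (hd j (v j)).comp_hasFDerivAt v (hasFDerivAt_apply j v)
  have H := ((h 0).mul (h 1)).mul (h 2)
  have e : (fun u : V3 => ∏ j, ψ j (u j)) = fun u => ψ 0 (u 0) * ψ 1 (u 1) * ψ 2 (u 2) := by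
    ext u; rw [Fin.prod_univ_three]
  rw [e]
  refine ⟨H.differentiableAt, fun i => ?_⟩
  rw [pd]
  erw [H.fderiv]
  fin_cases i <;> simp [Fin.prod_univ_three] <;> ring

lemma differentiable_Herm (α : Fin 3 → ℕ) : Differentiable ℝ (Herm α) := by
  rw [funext (Herm_eq α)]
  exact fun v => (hasFDerivAt_prod3 (fun j => he (α j)) _ (fun j x => hasDerivAt_he _ x) v).1

lemma pd_Herm (α : Fin 3 → ℕ) (s : Fin 3) (v : V3) :
    pd s (Herm α) v = α s * Herm (α - Pi.single s 1) v := by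
  rw [funext (Herm_eq α), (hasFDerivAt_prod3 (fun j => he (α j)) _ (fun j x => hasDerivAt_he _ x) v).2 s,
    Herm_eq, ← Finset.mul_prod_erase _ _ (Finset.mem_univ s)]
  conv_rhs => rw [← Finset.mul_prod_erase _ _ (Finset.mem_univ s)]
  simp only [if_true, he'_eq, Pi.sub_apply, Pi.single_eq_same, mul_assoc]
  congr 2
  refine Finset.prod_congr rfl fun j hj => ?_
  rw [if_neg (Finset.ne_of_mem_erase hj), Pi.single_eq_of_ne (Finset.ne_of_mem_erase hj)]; simp

/-- Hermite function. -/
def hM (α : Fin 3 → ℕ) (v : V3) : ℝ := Herm α v * Mxw v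

lemma hM_eq (α : Fin 3 → ℕ) (v : V3) :
    hM α v = cM * ∏ i, (he (α i) (v i) * Real.exp (-(v i ^ 2) / 2)) := by
  rw [hM, Herm_eq, Mxw_prod, Finset.prod_mul_distrib]; ring

lemma continuous_hM (α : Fin 3 → ℕ) : Continuous (hM α) := (continuous_Herm α).mul continuous_Mxw

lemma differentiable_hM (α : Fin 3 → ℕ) : Differentiable ℝ (hM α) := by
  rw [funext (hM_eq α)]
  exact fun v => (hasFDerivAt_prod3 (fun j x => he (α j) x * Real.exp (-(x ^ 2) / 2)) _
    (fun j x => hasDerivAt_he_gauss _ x) v).1.const_mul cM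

lemma pd_hM (α : Fin 3 → ℕ) (s : Fin 3) (v : V3) :
    pd s (hM α) v = - hM (α + Pi.single s 1) v := by
  have H := hasFDerivAt_prod3 (fun j x => he (α j) x * Real.exp (-(x ^ 2) / 2)) _
    (fun j x => hasDerivAt_he_gauss _ x) v
  have h2 := H.2 s
  rw [funext (hM_eq α), pd, fderiv_const_mul H.1, smul_apply, smul_eq_mul]
  rw [pd] at h2
  rw [h2, hM_eq, ← Finset.mul_prod_erase _ _ (Finset.mem_univ s)]
  conv_rhs => rw [← Finset.mul_prod_erase _ _ (Finset.mem_univ s)]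
  simp only [if_true, Pi.add_apply, Pi.single_eq_same]
  rw [neg_mul, mul_neg]
  congr 3
  refine Finset.prod_congr rfl fun j hj => ?_
  rw [if_neg (Finset.ne_of_mem_erase hj), Pi.single_eq_of_ne (Finset.ne_of_mem_erase hj)]; simp

lemma Herm_le_exp (ε : ℝ) (hε : 0 < ε) (α : Fin 3 → ℕ) :
    ∃ C : ℝ, 0 ≤ C ∧ ∀ v : V3, |Herm α v| ≤ C * Real.exp (ε * sqn v) := by
  choose C hC h using fun i => he_le_exp ε hε (α i)
  refine ⟨∏ i, C i, Finset.prod_nonneg fun i _ => hC i, fun v => ?_⟩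
  rw [Herm_eq, Finset.abs_prod, sqn, Finset.mul_sum, Real.exp_sum, ← Finset.prod_mul_distrib]
  exact Finset.prod_le_prod (fun _ _ => abs_nonneg _) fun i _ => h i (v i)

lemma hM_le_exp (a : ℝ) (ha : a < 1 / 2) (α : Fin 3 → ℕ) :
    ∃ C : ℝ, 0 ≤ C ∧ ∀ v : V3, |hM α v| ≤ C * Real.exp (-a * sqn v) := by
  obtain ⟨C, hC, h⟩ := Herm_le_exp (1 / 2 - a) (by linarith) α
  refine ⟨cM * C, mul_nonneg cM_pos.le hC, fun v => ?_⟩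
  rw [hM, abs_mul, abs_of_pos (Mxw_pos v), Mxw_eq]
  have e : Real.exp (-a * sqn v) = Real.exp ((1 / 2 - a) * sqn v) * Real.exp (-(sqn v) / 2) := by
    rw [← Real.exp_add]; congr 1; ring
  rw [e]
  have h3 := cM_pos
  calc _ ≤ (C * Real.exp ((1 / 2 - a) * sqn v)) * (cM * Real.exp (-(sqn v) / 2)) := by
        gcongr; exact h v
    _ = _ := by ring

lemma sqn_smul (c : ℝ) (v : V3) : sqn (c • v) = c ^ 2 * sqn v := by
  simp [sqn, Finset.mul_sum, mul_pow]

lemma sqn_add_sub (h g : V3) : sqn (h + g) + sqn (h - g) = 2 * (sqn h + sqn g) := by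
  simp only [sqn, Fin.sum_univ_three, Pi.add_apply, Pi.sub_apply]; ring

lemma Mxw_rot (h g : V3) : Mxw ((√2)⁻¹ • (h + g)) * Mxw ((√2)⁻¹ • (h - g)) = Mxw h * Mxw g := by
  have s22 : ((√2)⁻¹) ^ 2 = (1 / 2 : ℝ) := by rw [inv_pow, Real.sq_sqrt (by norm_num)]; norm_num
  have h1 := sqn_add_sub h g
  simp only [Mxw_eq, sqn_smul, s22]
  rw [mul_mul_mul_comm, mul_mul_mul_comm cM _ cM, ← Real.exp_add, ← Real.exp_add]
  congr 2; linarith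

lemma Herm_expand (l k : Fin 3 → ℕ) (h g : V3) :
    Herm l ((√2)⁻¹ • (h + g)) * Herm k ((√2)⁻¹ • (h - g)) =
      ∑ p ∈ Fintype.piFinset (fun i => Finset.range (l i + k i + 1)),
        aMulti p (l + k - p) l k * (Herm p h * Herm (l + k - p) g) := by
  simp only [Herm_eq, aMulti, ← Finset.prod_mul_distrib, Pi.sub_apply, Pi.add_apply]
  rw [← Finset.prod_univ_sum (fun i => Finset.range (l i + k i + 1)) (fun i p =>
    aCoe p (l i + k i - p) (l i) (k i) * (he p (h i) * he (l i + k i - p) (g i)))]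
  refine Finset.prod_congr rfl fun i _ => ?_
  rw [← he_expand]
  simp [div_eq_inv_mul]

lemma Herm_expand_single (l : Fin 3 → ℕ) (h g : V3) :
    Herm l ((√2)⁻¹ • (h + g)) =
      ∑ p ∈ Fintype.piFinset (fun i => Finset.range (l i + 1)),
        (2 : ℝ) ^ (-((degIdx l : ℝ) / 2)) * (multiFact l / (multiFact p * multiFact (l - p))) *
          (Herm p h * Herm (l - p) g) := by
  have e : ∀ p ∈ Fintype.piFinset (fun i => Finset.range (l i + 1)),
      (2 : ℝ) ^ (-((degIdx l : ℝ) / 2)) * (multiFact l / (multiFact p * multiFact (l - p))) *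
          (Herm p h * Herm (l - p) g) = ∏ i, (((2 : ℝ) ^ (-((l i : ℝ) / 2)) * (l i).choose (p i)) *
      (he (p i) (h i) * he (l i - p i) (g i))) := by
    intro p hp
    simp only [Fintype.mem_piFinset, Finset.mem_range] at hp
    have hc : ∀ i, ((l i).choose (p i) : ℝ) = (l i).factorial / ((p i).factorial * (l i - p i).factorial) :=
      fun i => Nat.cast_choose ℝ (by have := hp i; omega)
    simp only [Herm_eq, Finset.prod_mul_distrib, hc, ← Real.rpow_sum_of_pos (show (0:ℝ) < 2 by norm_num)]
    congr 2
    · congr 1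
      rw [Fin.sum_univ_three, degIdx]; push_cast; ring
    · simp only [Fin.prod_univ_three, multiFact, Pi.sub_apply]
      push_cast
      field_simp
  rw [Finset.sum_congr rfl e, Herm_eq]
  rw [← Finset.prod_univ_sum (fun i => Finset.range (l i + 1)) (fun i p =>
    ((2 : ℝ) ^ (-((l i : ℝ) / 2)) * (l i).choose p) * (he p (h i) * he (l i - p) (g i)))]
  refine Finset.prod_congr rfl fun i _ => ?_
  rw [← he_expand_single]
  simp [div_eq_inv_mul]

lemma Herm_orth (p q : Fin 3 → ℕ) :
    ∫ h : V3, Herm p h * Herm q h * Mxw h = if p = q then (multiFact q : ℝ) else 0 := by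
  have e : ∀ h : V3, Herm p h * Herm q h * Mxw h =
      cM * ∏ i, (he (p i) (h i) * he (q i) (h i) * Real.exp (-(h i ^ 2) / 2)) := by
    intro h
    rw [Herm_eq, Herm_eq, Mxw_prod, Finset.prod_mul_distrib, Finset.prod_mul_distrib]; ring
  simp only [e]
  rw [integral_const_mul, integral_fintype_prod_volume_eq_prod
    (fun i x => he (p i) x * he (q i) x * Real.exp (-(x ^ 2) / 2))]
  simp only [he_orth]
  by_cases hpq : p = q
  · subst hpq
    simp only [if_true, Finset.prod_mul_distrib, Finset.prod_const, Finset.card_univ, Fintype.card_fin]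
    rw [← Real.rpow_natCast, ← Real.rpow_mul (by positivity), ← mul_assoc, cM,
      ← Real.rpow_add (by positivity)]
    norm_num [Fin.prod_univ_three, multiFact]
  · rw [if_neg hpq]
    obtain ⟨i, hi⟩ := Function.ne_iff.mp hpq
    rw [Finset.prod_eq_zero (Finset.mem_univ i) (if_neg hi), mul_zero]

lemma integrable_nrm_exp (β c : ℝ) (hβ : -3 < β) (hc : 0 < c) :
    Integrable (fun v : V3 => nrm v ^ β * Real.exp (-c * sqn v)) := by
  have h1 : Integrable (fun x : EuclideanSpace ℝ (Fin 3) =>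
      (fun r : ℝ => r ^ β * Real.exp (-c * r ^ 2)) ‖x‖) := by
    refine (integrable_fun_norm_addHaar (volume : Measure (EuclideanSpace ℝ (Fin 3))) (f := fun r : ℝ => r ^ β * Real.exp (-c * r ^ 2))).2 ?_
    refine (integrableOn_rpow_mul_exp_neg_mul_sq hc (s := β + 2) (by linarith)).congr_fun ?_
      measurableSet_Ioi
    intro r hr
    have hr' : (0:ℝ) < r := hr
    simp only [finrank_euclideanSpace, Fintype.card_fin, smul_eq_mul]
    rw [Real.rpow_add hr']
    norm_num
    ring
  have h2 := (PiLp.volume_preserving_toLp (Fin 3)).integrable_comp_of_integrable h1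
  refine h2.congr (Filter.Eventually.of_forall fun v => ?_)
  have e : ‖(WithLp.toLp 2 v : EuclideanSpace ℝ (Fin 3))‖ = nrm v := by
    rw [EuclideanSpace.norm_eq, nrm]; simp
  simp only [Function.comp, e, nrm_sq]

lemma sqn_sub_ge (v z : V3) : sqn z / 2 - sqn v ≤ sqn (v - z) := by
  simp only [sqn, Fin.sum_univ_three, Pi.sub_apply]
  nlinarith [sq_nonneg (2 * v 0 - z 0), sq_nonneg (2 * v 1 - z 1), sq_nonneg (2 * v 2 - z 2)]

lemma opNorm_le_sum (T : V3 →L[ℝ] ℝ) : ‖T‖ ≤ ∑ i, |T (Pi.single i 1)| := by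
  refine T.opNorm_le_bound (Finset.sum_nonneg fun _ _ => abs_nonneg _) fun x => ?_
  have hx : x = ∑ i, x i • (Pi.single i (1:ℝ) : V3) := by
    ext j; simp [Finset.sum_apply, Pi.single_apply]
  have : T x = ∑ i, x i * T (Pi.single i 1) := by
    conv_lhs => rw [hx]
    simp [map_sum]
  rw [this, Finset.sum_mul, Real.norm_eq_abs]
  refine (Finset.abs_sum_le_sum_abs _ _).trans (Finset.sum_le_sum fun i _ => ?_)
  rw [abs_mul, mul_comm]
  exact mul_le_mul_of_nonneg_left (norm_le_pi_norm x i) (abs_nonneg _)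

lemma hM_shift_le (α : Fin 3 → ℕ) : ∃ C : ℝ, 0 ≤ C ∧ ∀ v z : V3,
    |hM α (v - z)| ≤ C * Real.exp (1 / 4 * sqn v) * Real.exp (-(1 / 8) * sqn z) := by
  obtain ⟨C, hC, h⟩ := hM_le_exp (1 / 4) (by norm_num) α
  refine ⟨C, hC, fun v z => (h _).trans ?_⟩
  rw [mul_assoc, ← Real.exp_add]
  have := sqn_sub_ge v z
  gcongr
  linarith

/-- Convolution of a kernel with a Hermite function. -/
def cv (K : V3 → ℝ) (α : Fin 3 → ℕ) (v : V3) : ℝ := ∫ z : V3, K z * hM α (v - z)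

section conv
variable {K : V3 → ℝ} {D β : ℝ}

lemma integrable_conv (hK : Measurable K) (hβ : -3 < β) (hKb : ∀ z, |K z| ≤ D * nrm z ^ β)
    (α : Fin 3 → ℕ) (v : V3) : Integrable (fun z => K z * hM α (v - z)) := by
  obtain ⟨C, hC, h⟩ := hM_shift_le α
  refine ((integrable_nrm_exp β (1 / 8) hβ (by norm_num)).const_mul
    (D * (C * Real.exp (1 / 4 * sqn v)))).mono' ?_ (Filter.Eventually.of_forall fun z => ?_)
  · exact (hK.mul ((continuous_hM α).measurable.comp (measurable_const.sub measurable_id))).aestronglyMeasurable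
  · rw [Real.norm_eq_abs, abs_mul]
    calc _ ≤ (D * nrm z ^ β) * (C * Real.exp (1 / 4 * sqn v) * Real.exp (-(1 / 8) * sqn z)) :=
        mul_le_mul (hKb z) (h v z) (abs_nonneg _) ((abs_nonneg _).trans (hKb z))
      _ = _ := by ring

lemma cv_le (hβ : -3 < β) (hKb : ∀ z, |K z| ≤ D * nrm z ^ β)
    (α : Fin 3 → ℕ) : ∃ C : ℝ, 0 ≤ C ∧ ∀ v, |cv K α v| ≤ C * Real.exp (1 / 4 * sqn v) := by
  obtain ⟨C, hC, h⟩ := hM_shift_le α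
  have hD : ∀ z, 0 ≤ D * nrm z ^ β := fun z => (abs_nonneg _).trans (hKb z)
  refine ⟨C * ∫ z : V3, D * (nrm z ^ β * Real.exp (-(1 / 8) * sqn z)), mul_nonneg hC
    (integral_nonneg fun z => ?_), fun v => ?_⟩
  · rw [← mul_assoc]; exact mul_nonneg (hD z) (Real.exp_pos _).le
  · have := norm_integral_le_of_norm_le (f := fun z => K z * hM α (v - z))
      ((integrable_nrm_exp β (1 / 8) hβ (by norm_num)).const_mul
        (D * (C * Real.exp (1 / 4 * sqn v)))) (Filter.Eventually.of_forall fun z => ?_)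
    · refine this.trans (le_of_eq ?_)
      rw [integral_const_mul, integral_const_mul]; ring
    · rw [Real.norm_eq_abs, abs_mul]
      calc _ ≤ (D * nrm z ^ β) * (C * Real.exp (1 / 4 * sqn v) * Real.exp (-(1 / 8) * sqn z)) :=
          mul_le_mul (hKb z) (h v z) (abs_nonneg _) ((abs_nonneg _).trans (hKb z))
        _ = _ := by ring

lemma hasFDerivAt_cv (hK : Measurable K) (hβ : -3 < β) (hKb : ∀ z, |K z| ≤ D * nrm z ^ β)
    (α : Fin 3 → ℕ) (v : V3) :
    DifferentiableAt ℝ (cv K α) v ∧ ∀ i, pd i (cv K α) v = - cv K (α + Pi.single i 1) v := by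
  choose C hC h using fun i : Fin 3 => hM_shift_le (α + Pi.single i 1)
  have hD : ∀ z, 0 ≤ D * nrm z ^ β := fun z => (abs_nonneg _).trans (hKb z)
  obtain ⟨R, hR⟩ : ∃ R, ∀ u ∈ Metric.closedBall v 1, sqn u ≤ R := by
    obtain ⟨R, hR⟩ := (isCompact_closedBall v 1).bddAbove_image continuous_sqn.continuousOn
    exact ⟨R, fun u hu => hR ⟨u, hu, rfl⟩⟩
  have hmeas : ∀ u : V3, AEStronglyMeasurable (fun z => K z * hM α (u - z)) volume := fun u =>
    (integrable_conv hK hβ hKb α u).aestronglyMeasurable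
  have hm' : AEStronglyMeasurable (fun z => K z • fderiv ℝ (hM α) (v - z)) volume :=
    (hK.smul ((measurable_fderiv ℝ (hM α)).comp
      (measurable_const.sub measurable_id))).aestronglyMeasurable
  have hbd : ∀ z, ∀ u ∈ Metric.closedBall v 1, ‖K z • fderiv ℝ (hM α) (u - z)‖ ≤
      ∑ i, (D * (C i * Real.exp (1 / 4 * R))) * (nrm z ^ β * Real.exp (-(1 / 8) * sqn z)) := by
    intro z u hu
    rw [norm_smul]
    calc _ ≤ (D * nrm z ^ β) * ∑ i, (C i * Real.exp (1 / 4 * R) * Real.exp (-(1 / 8) * sqn z)) := by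
          refine mul_le_mul (hKb z) ((opNorm_le_sum _).trans (Finset.sum_le_sum fun i _ => ?_))
            (norm_nonneg _) (hD z)
          have := pd_hM α i (u - z)
          rw [pd] at this
          rw [this, abs_neg]
          refine (h i u z).trans ?_
          have := hC i
          have := hR u hu
          gcongr
      _ = _ := by
          rw [Finset.mul_sum]; exact Finset.sum_congr rfl fun i _ => by ring
  have hbi : Integrable (fun z : V3 => ∑ i, (D * (C i * Real.exp (1 / 4 * R))) *
      (nrm z ^ β * Real.exp (-(1 / 8) * sqn z))) :=
    integrable_finsetSum _ fun i _ =>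
      (integrable_nrm_exp β (1 / 8) hβ (by norm_num)).const_mul _
  have hintg : Integrable (fun z => K z • fderiv ℝ (hM α) (v - z)) :=
    hbi.mono' hm' (Filter.Eventually.of_forall fun z =>
      hbd z v (Metric.mem_closedBall_self zero_le_one))
  have key := hasFDerivAt_integral_of_dominated_of_fderiv_le (μ := (volume : Measure V3)) (𝕜 := ℝ)
    (F := fun u z => K z * hM α (u - z)) (x₀ := v) (s := Metric.closedBall v 1)
    (F' := fun u z => K z • fderiv ℝ (hM α) (u - z))
    (Metric.closedBall_mem_nhds v one_pos)
    (Filter.Eventually.of_forall hmeas) (integrable_conv hK hβ hKb α v) hm'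
    (Filter.Eventually.of_forall hbd) hbi ?_
  · refine ⟨key.differentiableAt, fun i => ?_⟩
    have e : pd i (cv K α) v = (∫ z, K z • fderiv ℝ (hM α) (v - z)) (Pi.single i 1) := by
      rw [pd]; exact congrArg (fun T : V3 →L[ℝ] ℝ => T (Pi.single i 1)) key.fderiv
    rw [e, ContinuousLinearMap.integral_apply hintg, cv, ← integral_neg]
    refine integral_congr_ae (Filter.Eventually.of_forall fun z => ?_)
    have := pd_hM α i (v - z)
    rw [pd] at this
    simp only [smul_apply, smul_eq_mul]
    rw [this]; ring
  · refine Filter.Eventually.of_forall fun z u _ => ?_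
    have := ((differentiable_hM α (u - z)).hasFDerivAt.comp u
      ((hasFDerivAt_id u).sub_const z)).const_mul (K z)
    simpa using this
end conv

lemma abs_coord_mul_le (z : V3) (i j : Fin 3) : |z i * z j| ≤ sqn z := by
  have h : ∀ k : Fin 3, z k ^ 2 ≤ sqn z := fun k =>
    Finset.single_le_sum (f := fun k => z k ^ 2) (fun _ _ => sq_nonneg _) (Finset.mem_univ k)
  rw [abs_le]
  constructor <;> nlinarith [h i, h j, sq_nonneg (z i + z j), sq_nonneg (z i - z j)]

lemma measurable_Aker (Λ γ : ℝ) (i j : Fin 3) : Measurable (fun z => Aker Λ γ z i j) := by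
  have h := continuous_nrm.measurable
  have h1 : ∀ k : Fin 3, Measurable fun z : V3 => z k := fun k => measurable_pi_apply k
  unfold Aker
  exact ((h.pow_const _).const_mul _).mul (measurable_const.sub (((h1 i).mul (h1 j)).div (h.pow_const 2)))

lemma Aker_le (Λ γ : ℝ) (hΛ : 0 < Λ) (i j : Fin 3) (z : V3) :
    |Aker Λ γ z i j| ≤ (2 * Λ) * nrm z ^ (γ + 2) := by
  have h0 := Real.rpow_nonneg (nrm_nonneg z) (γ + 2)
  have h1 : |(if i = j then (1 : ℝ) else 0) - z i * z j / nrm z ^ 2| ≤ 2 := by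
    have a : |(if i = j then (1 : ℝ) else 0)| ≤ 1 := by split_ifs <;> simp
    have b : |z i * z j / nrm z ^ 2| ≤ 1 := by
      rw [abs_div, nrm_sq, abs_of_nonneg (sqn_nonneg z)]
      exact div_le_one_of_le₀ (abs_coord_mul_le z i j) (sqn_nonneg z)
    exact (abs_sub _ _).trans (by linarith)
  rw [Aker, abs_mul, abs_of_nonneg (by positivity)]
  nlinarith [mul_nonneg hΛ.le h0]

lemma HhM_le (β μ : Fin 3 → ℕ) : ∃ C : ℝ, 0 ≤ C ∧ ∀ v : V3,
    |Herm β v * hM μ v| ≤ C * Real.exp (-(5 / 16) * sqn v) := by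
  obtain ⟨C1, hC1, h1⟩ := Herm_le_exp (1 / 16) (by norm_num) β
  obtain ⟨C2, hC2, h2⟩ := hM_le_exp (3 / 8) (by norm_num) μ
  refine ⟨C1 * C2, by positivity, fun v => ?_⟩
  rw [abs_mul]
  calc _ ≤ (C1 * Real.exp (1 / 16 * sqn v)) * (C2 * Real.exp (-(3 / 8) * sqn v)) :=
        mul_le_mul (h1 v) (h2 v) (abs_nonneg _) (by positivity)
    _ = C1 * C2 * (Real.exp (1 / 16 * sqn v) * Real.exp (-(3 / 8) * sqn v)) := by ring
    _ = _ := by rw [← Real.exp_add]; congr 2; ring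

lemma integrable_exp_sqn (c : ℝ) (hc : 0 < c) : Integrable (fun v : V3 => Real.exp (-c * sqn v)) := by
  simpa using integrable_nrm_exp 0 c (by norm_num) hc

section conv2
variable {K : V3 → ℝ} {D b : ℝ}

lemma integrable_Hcv (hK : Measurable K) (hb : -3 < b) (hKb : ∀ z, |K z| ≤ D * nrm z ^ b)
    (β μ ν : Fin 3 → ℕ) : Integrable (fun v => Herm β v * (hM μ v * cv K ν v)) := by
  obtain ⟨C1, hC1, h1⟩ := HhM_le β μ
  obtain ⟨C2, hC2, h2⟩ := cv_le hb hKb ν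
  have hd : Differentiable ℝ (cv K ν) := fun v => (hasFDerivAt_cv hK hb hKb ν v).1
  refine ((integrable_exp_sqn (1 / 16) (by norm_num)).const_mul (C1 * C2)).mono'
    ((continuous_Herm β).mul ((continuous_hM μ).mul hd.continuous)).aestronglyMeasurable
    (Filter.Eventually.of_forall fun v => ?_)
  rw [Real.norm_eq_abs, ← mul_assoc, abs_mul]
  calc _ ≤ (C1 * Real.exp (-(5 / 16) * sqn v)) * (C2 * Real.exp (1 / 4 * sqn v)) :=
        mul_le_mul (h1 v) (h2 v) (abs_nonneg _) (by positivity)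
    _ = C1 * C2 * (Real.exp (-(5 / 16) * sqn v) * Real.exp (1 / 4 * sqn v)) := by ring
    _ = _ := by rw [← Real.exp_add]; congr 2; ring

lemma pd_hMcv (hK : Measurable K) (hb : -3 < b) (hKb : ∀ z, |K z| ≤ D * nrm z ^ b)
    (μ ν : Fin 3 → ℕ) (i : Fin 3) (v : V3) :
    pd i (fun u => hM μ u * cv K ν u) v =
      -(hM (μ + Pi.single i 1) v * cv K ν v) - hM μ v * cv K (ν + Pi.single i 1) v := by
  have h1 := pd_hM μ i v
  obtain ⟨h2, h3⟩ := hasFDerivAt_cv hK hb hKb ν v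
  have h3 := h3 i
  rw [pd] at h1 h3 ⊢
  rw [fderiv_fun_mul (differentiable_hM μ v) h2]
  simp only [add_apply, smul_apply, smul_eq_mul, h1, h3]
  ring

lemma differentiable_hMcv (hK : Measurable K) (hb : -3 < b) (hKb : ∀ z, |K z| ≤ D * nrm z ^ b)
    (μ ν : Fin 3 → ℕ) : Differentiable ℝ (fun u => hM μ u * cv K ν u) := fun v =>
  (differentiable_hM μ v).mul (hasFDerivAt_cv hK hb hKb ν v).1

lemma integrable_H_pd (hK : Measurable K) (hb : -3 < b) (hKb : ∀ z, |K z| ≤ D * nrm z ^ b)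
    (α μ ν : Fin 3 → ℕ) (i : Fin 3) :
    Integrable (fun v => Herm α v * pd i (fun u => hM μ u * cv K ν u) v) := by
  refine ((integrable_Hcv hK hb hKb α (μ + Pi.single i 1) ν).neg.sub
    (integrable_Hcv hK hb hKb α μ (ν + Pi.single i 1))).congr
    (Filter.Eventually.of_forall fun v => ?_)
  simp only [Pi.sub_apply, Pi.neg_apply]
  rw [pd_hMcv hK hb hKb]; ring

/-- The basic double integral. -/
def Jint (K : V3 → ℝ) (β μ ν : Fin 3 → ℕ) : ℝ := ∫ v : V3, Herm β v * (hM μ v * cv K ν v)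

lemma ibp_term (hK : Measurable K) (hb : -3 < b) (hKb : ∀ z, |K z| ≤ D * nrm z ^ b)
    (α μ ν : Fin 3 → ℕ) (i : Fin 3) :
    ∫ v, Herm α v * pd i (fun u => hM μ u * cv K ν u) v =
      -(α i * Jint K (α - Pi.single i 1) μ ν) := by
  have key := integral_mul_fderiv_eq_neg_fderiv_mul_of_integrable (μ := (volume : Measure V3))
    (f := Herm α) (g := fun u => hM μ u * cv K ν u) (v := Pi.single i (1 : ℝ))
    ?_ (integrable_H_pd hK hb hKb α μ ν i) (integrable_Hcv hK hb hKb α μ ν)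
    (fun x _ => differentiable_Herm α x) (fun x _ => differentiable_hMcv hK hb hKb μ ν x)
  · refine key.trans ?_
    rw [Jint, ← integral_const_mul]
    congr 2; ext v
    have := pd_Herm α i v
    rw [pd] at this
    rw [this]; ring
  · refine ((integrable_Hcv hK hb hKb (α - Pi.single i 1) μ ν).const_mul (α i : ℝ)).congr
      (Filter.Eventually.of_forall fun v => ?_)
    have := pd_Herm α i v
    rw [pd] at this
    simp only [this]; ring

lemma integrable_K_HHM (hK : Measurable K) (hb : -3 < b) (hKb : ∀ z, |K z| ≤ D * nrm z ^ b)
    (r q : Fin 3 → ℕ) : Integrable (fun g => K g * (Herm r g * Herm q g * Mxw g)) := by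
  obtain ⟨C, hC, h⟩ := HhM_le r q
  refine ((integrable_nrm_exp b (5 / 16) hb (by norm_num)).const_mul (D * C)).mono' ?_
    (Filter.Eventually.of_forall fun v => ?_)
  · exact (hK.mul (((continuous_Herm r).mul (continuous_Herm q)).mul
      continuous_Mxw).measurable).aestronglyMeasurable
  · rw [Real.norm_eq_abs, abs_mul, mul_assoc (Herm r v)]
    calc _ ≤ (D * nrm v ^ b) * (C * Real.exp (-(5 / 16) * sqn v)) :=
          mul_le_mul (hKb v) (h v) (abs_nonneg _) ((abs_nonneg _).trans (hKb v))
      _ = _ := by ring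

lemma Jint_swap (hK : Measurable K) (hb : -3 < b) (hKb : ∀ z, |K z| ≤ D * nrm z ^ b)
    (β μ ν : Fin 3 → ℕ) :
    Jint K β μ ν = ∫ z, ∫ v, Herm β v * hM μ v * (K z * hM ν (v - z)) := by
  have e : Jint K β μ ν = ∫ v, ∫ z, Herm β v * hM μ v * (K z * hM ν (v - z)) := by
    rw [Jint]; congr 1; ext v
    rw [integral_const_mul, cv]; ring
  rw [e]
  refine integral_integral_swap ?_
  obtain ⟨C1, hC1, h1⟩ := HhM_le β μ
  obtain ⟨C2, hC2, h2⟩ := hM_shift_le ν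
  refine (((integrable_exp_sqn (1 / 16) (by norm_num)).const_mul C1).mul_prod
    ((integrable_nrm_exp b (1 / 8) hb (by norm_num)).const_mul (D * C2))).mono' ?_
    (Filter.Eventually.of_forall fun x => ?_)
  · have c1 : Measurable fun x : V3 × V3 => Herm β x.1 * hM μ x.1 :=
      ((continuous_Herm β).mul (continuous_hM μ)).measurable.comp measurable_fst
    have c2 : Measurable fun x : V3 × V3 => K x.2 := hK.comp measurable_snd
    have c3 : Measurable fun x : V3 × V3 => hM ν (x.1 - x.2) :=
      (continuous_hM ν).measurable.comp (measurable_fst.sub measurable_snd)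
    exact (c1.mul (c2.mul c3)).aestronglyMeasurable
  · obtain ⟨v, z⟩ := x
    simp only [Function.uncurry]
    rw [Real.norm_eq_abs, abs_mul, abs_mul (K z)]
    have hD := (abs_nonneg _).trans (hKb z)
    calc _ ≤ (C1 * Real.exp (-(5 / 16) * sqn v)) * ((D * nrm z ^ b) *
          (C2 * Real.exp (1 / 4 * sqn v) * Real.exp (-(1 / 8) * sqn z))) :=
          mul_le_mul (h1 v) (mul_le_mul (hKb z) (h2 v z) (abs_nonneg _) hD)
            (by positivity) (by positivity)
      _ = C1 * (Real.exp (-(5 / 16) * sqn v) * Real.exp (1 / 4 * sqn v)) * (D * C2 *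
          (nrm z ^ b * Real.exp (-(1 / 8) * sqn z))) := by ring
      _ = _ := by rw [← Real.exp_add]; congr 3; ring_nf

lemma Jint_rot (hK : Measurable K) (hb : -3 < b) (hKb : ∀ z, |K z| ≤ D * nrm z ^ b)
    (β μ ν : Fin 3 → ℕ) :
    Jint K β μ ν = ∫ g, ∫ h, K (√2 • g) * ((Herm β ((√2)⁻¹ • (h + g))) *
      (Herm μ ((√2)⁻¹ • (h + g)) * Herm ν ((√2)⁻¹ • (h - g))) * (Mxw h * Mxw g)) := by
  have s2 : (0:ℝ) < √2 := by positivity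
  rw [Jint_swap hK hb hKb]
  have e1 := Measure.integral_comp_smul_of_nonneg (volume : Measure V3)
    (fun z => ∫ v, Herm β v * hM μ v * (K z * hM ν (v - z))) (√2) (hR := s2.le)
  have e2 : ∀ g : V3, (∫ v, Herm β v * hM μ v * (K (√2 • g) * hM ν (v - √2 • g))) =
      (√2 ^ 3)⁻¹ * ∫ h, K (√2 • g) * ((Herm β ((√2)⁻¹ • (h + g))) *
      (Herm μ ((√2)⁻¹ • (h + g)) * Herm ν ((√2)⁻¹ • (h - g))) * (Mxw h * Mxw g)) := by
    intro g
    rw [← integral_add_right_eq_self _ ((√2)⁻¹ • g)]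
    have e3 := Measure.integral_comp_smul_of_nonneg (volume : Measure V3)
      (fun v => Herm β (v + (√2)⁻¹ • g) * hM μ (v + (√2)⁻¹ • g) *
        (K (√2 • g) * hM ν (v + (√2)⁻¹ • g - √2 • g))) ((√2)⁻¹) (hR := by positivity)
    simp only [Module.finrank_fin_fun, smul_eq_mul, inv_pow, inv_inv] at e3
    rw [eq_inv_mul_iff_mul_eq₀ (by positivity), ← e3]
    congr 1; ext h
    have a1 : (√2)⁻¹ • h + (√2)⁻¹ • g = (√2)⁻¹ • (h + g) := (smul_add _ _ _).symm
    have a2 : (√2)⁻¹ • (h + g) - √2 • g = (√2)⁻¹ • (h - g) := by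
      have : √2 = 2 * (√2)⁻¹ := by
        field_simp; exact Real.sq_sqrt (by norm_num)
      ext i
      simp only [Pi.sub_apply, Pi.smul_apply, Pi.add_apply, smul_eq_mul]
      linear_combination (- g i) * this
    rw [a1, a2, ← Mxw_rot, hM, hM]
    ring
  simp only [e2, integral_const_mul, Module.finrank_fin_fun, smul_eq_mul] at e1
  simpa only [integral_const_mul] using (mul_left_cancel₀ (by positivity) e1).symm

lemma integrable_HHM (r q : Fin 3 → ℕ) : Integrable (fun g => Herm r g * Herm q g * Mxw g) := by
  have := integrable_K_HHM (K := fun _ => 1) (D := 1) (b := 0) measurable_const (by norm_num)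
    (by simp) r q
  simpa using this

lemma Jint_sum (hK : Measurable K) (hb : -3 < b) (hKb : ∀ z, |K z| ≤ D * nrm z ^ b)
    (β μ ν : Fin 3 → ℕ) :
    Jint K β μ ν = ∑ p ∈ Fintype.piFinset (fun i => Finset.range (μ i + ν i + 1)),
      ∑ p' ∈ Fintype.piFinset (fun i => Finset.range (β i + 1)),
      (2 : ℝ) ^ (-((degIdx β : ℝ) / 2)) * (multiFact β / (multiFact p' * multiFact (β - p'))) *
        aMulti p (μ + ν - p) μ ν * (if p = p' then (multiFact p' : ℝ) else 0) *
        ∫ g, K (√2 • g) * (Herm (μ + ν - p) g * Herm (β - p') g * Mxw g) := by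
  have hK' : Measurable fun g : V3 => K (√2 • g) := hK.comp (measurable_const_smul (√2))
  have hKb' : ∀ g : V3, |K (√2 • g)| ≤ (D * √2 ^ b) * nrm g ^ b := by
    intro g
    refine (hKb _).trans (le_of_eq ?_)
    have : nrm (√2 • g) = √2 * nrm g := by
      rw [nrm, nrm]
      have := sqn_smul (√2) g
      rw [sqn, sqn] at this
      rw [this, Real.sqrt_mul (by positivity), Real.sqrt_sq (by positivity)]
    rw [this, Real.mul_rpow (by positivity) (nrm_nonneg g)]; ring
  rw [Jint_rot hK hb hKb]
  have e : ∀ g h : V3, K (√2 • g) * ((Herm β ((√2)⁻¹ • (h + g))) *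
      (Herm μ ((√2)⁻¹ • (h + g)) * Herm ν ((√2)⁻¹ • (h - g))) * (Mxw h * Mxw g)) =
      ∑ p ∈ Fintype.piFinset (fun i => Finset.range (μ i + ν i + 1)),
      ∑ p' ∈ Fintype.piFinset (fun i => Finset.range (β i + 1)),
      ((2 : ℝ) ^ (-((degIdx β : ℝ) / 2)) * (multiFact β / (multiFact p' * multiFact (β - p'))) *
        aMulti p (μ + ν - p) μ ν *
        (K (√2 • g) * (Herm (μ + ν - p) g * Herm (β - p') g * Mxw g))) *
        (Herm p h * Herm p' h * Mxw h) := by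
    intro g h
    rw [Herm_expand, Herm_expand_single, mul_comm (Finset.sum _ _), Finset.sum_mul_sum,
      Finset.sum_mul, Finset.mul_sum]
    refine Finset.sum_congr rfl fun p _ => ?_
    rw [Finset.sum_mul, Finset.mul_sum]
    refine Finset.sum_congr rfl fun p' _ => ?_
    ring
  have e' : ∀ g : V3, ∫ h, K (√2 • g) * ((Herm β ((√2)⁻¹ • (h + g))) *
      (Herm μ ((√2)⁻¹ • (h + g)) * Herm ν ((√2)⁻¹ • (h - g))) * (Mxw h * Mxw g)) =
      ∑ p ∈ Fintype.piFinset (fun i => Finset.range (μ i + ν i + 1)),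
      ∑ p' ∈ Fintype.piFinset (fun i => Finset.range (β i + 1)),
      ((2 : ℝ) ^ (-((degIdx β : ℝ) / 2)) * (multiFact β / (multiFact p' * multiFact (β - p'))) *
        aMulti p (μ + ν - p) μ ν * (if p = p' then (multiFact p' : ℝ) else 0)) *
        (K (√2 • g) * (Herm (μ + ν - p) g * Herm (β - p') g * Mxw g)) := by
    intro g
    simp only [e]
    rw [integral_finsetSum _ fun p _ => integrable_finsetSum _ fun p' _ =>
      (integrable_HHM p p').const_mul _]
    refine Finset.sum_congr rfl fun p _ => ?_
    rw [integral_finsetSum _ fun p' _ => (integrable_HHM p p').const_mul _]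
    refine Finset.sum_congr rfl fun p' _ => ?_
    rw [integral_const_mul, Herm_orth]; ring
  simp only [e']
  have hi := fun r q => integrable_K_HHM hK' hb hKb' r q
  rw [integral_finsetSum _ fun p _ => integrable_finsetSum _ fun p' _ => (hi _ _).const_mul _]
  refine Finset.sum_congr rfl fun p _ => ?_
  rw [integral_finsetSum _ fun p' _ => (hi _ _).const_mul _]
  refine Finset.sum_congr rfl fun p' _ => ?_
  rw [integral_const_mul]
end conv2

lemma ae_ne_zero : ∀ᵐ g : V3, g ≠ 0 := by
  rw [ae_iff]; simp

lemma nrm_pos {g : V3} (hg : g ≠ 0) : 0 < nrm g := by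
  refine Real.sqrt_pos.2 ?_
  obtain ⟨i, hi⟩ := Function.ne_iff.mp hg
  exact Finset.sum_pos' (fun _ _ => sq_nonneg _) ⟨i, Finset.mem_univ i, by
    have : g i ≠ 0 := hi
    positivity⟩

lemma nrm_smul (c : ℝ) (hc : 0 ≤ c) (g : V3) : nrm (c • g) = c * nrm g := by
  have h := sqn_smul c g
  rw [sqn, sqn] at h
  rw [nrm, nrm, h, Real.sqrt_mul (by positivity), Real.sqrt_sq hc]

lemma integrable_Gst (γ : ℝ) (hγ : γ > -5) (s t : Fin 3) (p q : Fin 3 → ℕ) :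
    Integrable (fun g : V3 => nrm g ^ γ * g s * g t * Herm p g * Herm q g * Mxw g) := by
  have h1 : ∀ k : Fin 3, Measurable fun z : V3 => z k := fun k => measurable_pi_apply k
  have := integrable_K_HHM (K := fun g => nrm g ^ γ * g s * g t) (D := 1) (b := γ + 2)
    (((continuous_nrm.measurable.pow_const _).mul (h1 s)).mul (h1 t)) (by linarith) ?_ p q
  · refine this.congr (Filter.Eventually.of_forall fun g => ?_)
    simp only; ring
  · intro g
    have h0 := Real.rpow_nonneg (nrm_nonneg g) (γ + 2)
    by_cases hg : g = 0
    · subst hg; simpa using h0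
    · rw [one_mul, Real.rpow_add (nrm_pos hg), mul_assoc, abs_mul,
        abs_of_nonneg (Real.rpow_nonneg (nrm_nonneg g) _)]
      refine mul_le_mul_of_nonneg_left ?_ (Real.rpow_nonneg (nrm_nonneg g) _)
      rw [Real.rpow_two, nrm_sq]
      exact abs_coord_mul_le g s t

lemma Aker_scaled (Λ γ : ℝ) (s t : Fin 3) (g : V3) (hg : g ≠ 0) :
    Aker Λ γ (√2 • g) s t = (2 : ℝ) ^ ((γ + 2) / 2) * Λ *
      (-(nrm g ^ γ * g s * g t) + (if s = t then (1 : ℝ) else 0) * ∑ r, nrm g ^ γ * g r * g r) := by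
  have hn := nrm_pos hg
  have h1 : (√2 * nrm g) ^ (γ + 2) = (2 : ℝ) ^ ((γ + 2) / 2) * (nrm g ^ γ * nrm g ^ 2) := by
    rw [Real.mul_rpow (by positivity) hn.le, Real.rpow_add hn, Real.rpow_two, Real.sqrt_eq_rpow,
      ← Real.rpow_mul (by norm_num)]
    congr 2; ring
  have h2 : ∑ r, nrm g ^ γ * g r * g r = nrm g ^ γ * nrm g ^ 2 := by
    rw [nrm_sq, sqn, Finset.mul_sum]
    exact Finset.sum_congr rfl fun r _ => by ring
  have s22 : √2 ^ 2 = 2 := Real.sq_sqrt (by norm_num)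
  rw [Aker, nrm_smul _ (by positivity), h1, h2]
  simp only [Pi.smul_apply, smul_eq_mul]
  have h3 : √2 * g s * (√2 * g t) / (√2 * nrm g) ^ 2 = g s * g t / nrm g ^ 2 := by
    field_simp
  rw [h3]
  field_simp
  ring

lemma Aker_integral (Λ γ : ℝ) (hγ : γ > -5) (s t : Fin 3) (r q : Fin 3 → ℕ) :
    ∫ g, Aker Λ γ (√2 • g) s t * (Herm r g * Herm q g * Mxw g) =
      (2 : ℝ) ^ ((γ + 2) / 2) * Λ * Bcoe γ s t r q := by
  have hi := fun s t => integrable_Gst γ hγ s t r q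
  have e : ∫ g, Aker Λ γ (√2 • g) s t * (Herm r g * Herm q g * Mxw g) =
      ∫ g, (2 : ℝ) ^ ((γ + 2) / 2) * Λ *
        (-(nrm g ^ γ * g s * g t * Herm r g * Herm q g * Mxw g) +
        (if s = t then (1 : ℝ) else 0) *
          ∑ k, nrm g ^ γ * g k * g k * Herm r g * Herm q g * Mxw g) := by
    refine integral_congr_ae (ae_ne_zero.mono fun g hg => ?_)
    simp only [Aker_scaled Λ γ s t g hg, Fin.sum_univ_three]
    ring
  have hn : Integrable (fun g : V3 => -(nrm g ^ γ * g s * g t * Herm r g * Herm q g * Mxw g)) :=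
    (hi s t).neg
  rw [e, integral_const_mul, integral_add hn
    ((integrable_finsetSum _ fun k _ => hi k k).const_mul _), integral_neg, integral_const_mul,
    integral_finsetSum _ fun k _ => hi k k]
  rfl

lemma mem_idxLt (n : ℕ) (p : Fin 3 → ℕ) : p ∈ idxLt n ↔ degIdx p < n := by
  unfold idxLt
  simp only [Finset.mem_filter, Fintype.mem_piFinset, Finset.mem_range, and_iff_right_iff_imp]
  intro h i
  unfold degIdx at h
  fin_cases i <;> simp <;> omega

lemma degIdx_mono {p q : Fin 3 → ℕ} (h : p ≤ q) : degIdx p ≤ degIdx q := by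
  have h0 : p 0 ≤ q 0 := h 0
  have h1 : p 1 ≤ q 1 := h 1
  have h2 : p 2 ≤ q 2 := h 2
  unfold degIdx; omega

lemma Jint_Aker (Λ γ : ℝ) (hΛ : 0 < Λ) (hγ : γ > -5) (s t : Fin 3) (β μ ν : Fin 3 → ℕ) :
    Jint (fun z => Aker Λ γ z s t) β μ ν = (2 : ℝ) ^ ((γ + 2 - degIdx β) / 2) * multiFact β *
      ∑ p ∈ idxLt (degIdx β + 1), if p ≤ β ∧ p ≤ μ + ν then
        Λ / (multiFact (β - p) : ℝ) * aMulti p (μ + ν - p) μ ν *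
          Bcoe γ s t (μ + ν - p) (β - p) else 0 := by
  rw [Jint_sum (measurable_Aker Λ γ s t) (by linarith : -3 < γ + 2) (Aker_le Λ γ hΛ s t),
    ← Finset.sum_filter, Finset.mul_sum]
  have hF : (idxLt (degIdx β + 1)).filter (fun p => p ≤ β ∧ p ≤ μ + ν) =
      (Fintype.piFinset (fun i => Finset.range (μ i + ν i + 1))).filter
        (fun p => p ∈ Fintype.piFinset (fun i => Finset.range (β i + 1))) := by
    ext p
    simp only [Finset.mem_filter, mem_idxLt, Fintype.mem_piFinset, Finset.mem_range,
      Nat.lt_succ_iff, Pi.le_def, Pi.add_apply]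
    constructor
    · rintro ⟨_, h1, h2⟩; exact ⟨h2, h1⟩
    · rintro ⟨h2, h1⟩; exact ⟨degIdx_mono h1, h1, h2⟩
  rw [hF, Finset.sum_filter]
  refine Finset.sum_congr rfl fun p _ => ?_
  simp only [mul_ite, ite_mul, mul_zero, zero_mul]
  rw [Finset.sum_ite_eq]
  refine if_congr Iff.rfl ?_ rfl
  rw [Aker_integral Λ γ hγ]
  have hp : (multiFact p : ℝ) ≠ 0 := by unfold multiFact; positivity
  have h2 : (2 : ℝ) ^ ((γ + 2 - degIdx β) / 2) =
      (2 : ℝ) ^ (-((degIdx β : ℝ) / 2)) * (2 : ℝ) ^ ((γ + 2) / 2) := by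
    rw [← Real.rpow_add (by norm_num)]; congr 1; ring
  rw [h2]
  field_simp

lemma flux_eq (Λ γ : ℝ) (hΛ : 0 < Λ) (hγ : γ > -5) (lam kap : Fin 3 → ℕ) (i : Fin 3) (w : V3) :
    ∫ w₁ : V3, ∑ j, Aker Λ γ (w - w₁) i j *
          (Herm lam w₁ * Mxw w₁ * pd j (fun u => Herm kap u * Mxw u) w -
            Herm lam w * Mxw w * pd j (fun u => Herm kap u * Mxw u) w₁) =
    ∑ j, (hM lam w * cv (fun z => Aker Λ γ z i j) (kap + Pi.single j 1) w -
      hM (kap + Pi.single j 1) w * cv (fun z => Aker Λ γ z i j) lam w) := by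
  obtain ⟨Φ, hΦ⟩ : ∃ Φ : V3 → ℝ, Φ = fun z => ∑ j,
      (hM lam w * (Aker Λ γ z i j * hM (kap + Pi.single j 1) (w - z)) -
        hM (kap + Pi.single j 1) w * (Aker Λ γ z i j * hM lam (w - z))) := ⟨_, rfl⟩
  have e : ∀ w₁ : V3, (∑ j, Aker Λ γ (w - w₁) i j *
          (Herm lam w₁ * Mxw w₁ * pd j (fun u => Herm kap u * Mxw u) w -
            Herm lam w * Mxw w * pd j (fun u => Herm kap u * Mxw u) w₁)) =
      Φ (w - w₁) := by
    intro w₁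
    rw [hΦ]
    refine Finset.sum_congr rfl fun j _ => ?_
    have h1 : ∀ w, pd j (fun u => Herm kap u * Mxw u) w = -hM (kap + Pi.single j 1) w := pd_hM kap j
    rw [h1, h1, sub_sub_cancel]
    change _ * (hM lam w₁ * _ - hM lam w * _) = _
    ring
  simp only [e]
  refine (integral_sub_left_eq_self Φ volume w).trans ?_
  rw [hΦ]
  have hi := fun j ν => integrable_conv (measurable_Aker Λ γ i j) (by linarith : -3 < γ + 2)
    (Aker_le Λ γ hΛ i j) ν w
  have hi2 : ∀ j, Integrable (fun z : V3 =>
      hM lam w * (Aker Λ γ z i j * hM (kap + Pi.single j 1) (w - z)) -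
        hM (kap + Pi.single j 1) w * (Aker Λ γ z i j * hM lam (w - z))) := fun j =>
    ((hi j _).const_mul _).sub ((hi j _).const_mul _)
  rw [integral_finsetSum _ fun j _ => hi2 j]
  refine Finset.sum_congr rfl fun j _ => ?_
  rw [integral_sub ((hi j _).const_mul _) ((hi j _).const_mul _), integral_const_mul,
    integral_const_mul]
  rfl

lemma coeA_eq_J (Λ γ : ℝ) (hΛ : 0 < Λ) (hγ : γ > -5) (α lam kap : Fin 3 → ℕ) :
    coeA Λ γ α lam kap = (1 / (multiFact α : ℝ)) * ∑ s, ∑ t, α s *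
      (Jint (fun z => Aker Λ γ z s t) (α - Pi.single s 1) (kap + Pi.single t 1) lam -
       Jint (fun z => Aker Λ γ z s t) (α - Pi.single s 1) lam (kap + Pi.single t 1)) := by
  have hb : -3 < γ + 2 := by linarith
  have hd := fun s t μ ν => differentiable_hMcv (measurable_Aker Λ γ s t) hb (Aker_le Λ γ hΛ s t) μ ν
  have hintg := fun s t μ ν =>
    integrable_H_pd (measurable_Aker Λ γ s t) hb (Aker_le Λ γ hΛ s t) α μ ν s
  have hd2 : ∀ s t, Differentiable ℝ (fun w =>
      hM lam w * cv (fun z => Aker Λ γ z s t) (kap + Pi.single t 1) w -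
      hM (kap + Pi.single t 1) w * cv (fun z => Aker Λ γ z s t) lam w) := fun s t =>
    (hd s t _ _).sub (hd s t _ _)
  have hintg2 : ∀ s t, Integrable (fun v : V3 =>
      Herm α v * pd s (fun w => hM lam w * cv (fun z => Aker Λ γ z s t)
          (kap + Pi.single t 1) w) v -
        Herm α v * pd s (fun w => hM (kap + Pi.single t 1) w *
          cv (fun z => Aker Λ γ z s t) lam w) v) := fun s t =>
    (hintg s t _ _).sub (hintg s t _ _)
  rw [coeA]
  congr 1
  simp only [flux_eq Λ γ hΛ hγ]
  have e : ∀ v, Herm α v * div3 (fun w i =>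
      ∑ j, (hM lam w * cv (fun z => Aker Λ γ z i j) (kap + Pi.single j 1) w -
      hM (kap + Pi.single j 1) w * cv (fun z => Aker Λ γ z i j) lam w)) v =
      ∑ s, ∑ t, (Herm α v * pd s (fun w => hM lam w * cv (fun z => Aker Λ γ z s t)
          (kap + Pi.single t 1) w) v -
        Herm α v * pd s (fun w => hM (kap + Pi.single t 1) w * cv (fun z => Aker Λ γ z s t) lam w) v) := by
    intro v
    rw [div3, Finset.mul_sum]
    refine Finset.sum_congr rfl fun s _ => ?_
    rw [pd, fderiv_fun_sum fun t _ => hd2 s t v]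
    rw [sum_apply, Finset.mul_sum]
    refine Finset.sum_congr rfl fun t _ => ?_
    rw [fderiv_fun_sub (hd s t _ _ v) (hd s t _ _ v), sub_apply, mul_sub]
    rfl
  simp only [e]
  rw [integral_finsetSum _ fun s _ => integrable_finsetSum _ fun t _ => hintg2 s t]
  refine Finset.sum_congr rfl fun s _ => ?_
  rw [integral_finsetSum _ fun t _ => hintg2 s t]
  refine Finset.sum_congr rfl fun t _ => ?_
  rw [integral_sub (hintg s t _ _) (hintg s t _ _),
    ibp_term (measurable_Aker Λ γ s t) hb (Aker_le Λ γ hΛ s t),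
    ibp_term (measurable_Aker Λ γ s t) hb (Aker_le Λ γ hΛ s t)]
  ring

lemma multiFact_pred (α : Fin 3 → ℕ) (s : Fin 3) (h : α s ≠ 0) :
    (multiFact α : ℝ) = α s * multiFact (α - Pi.single s 1) := by
  have h1 : ∀ β : Fin 3 → ℕ, multiFact β = ∏ i, (β i).factorial := fun β => by
    rw [multiFact, Fin.prod_univ_three]
  rw [h1, h1, ← Finset.mul_prod_erase _ _ (Finset.mem_univ s)]
  conv_rhs => rw [← Finset.mul_prod_erase _ _ (Finset.mem_univ s)]
  have h2 : ∏ x ∈ Finset.univ.erase s, ((α - Pi.single s 1 : Fin 3 → ℕ) x).factorial =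
      ∏ x ∈ Finset.univ.erase s, (α x).factorial := by
    refine Finset.prod_congr rfl fun j hj => ?_
    simp [Pi.single_eq_of_ne (Finset.ne_of_mem_erase hj)]
  rw [h2, ← Nat.mul_factorial_pred h]
  simp only [Pi.sub_apply, Pi.single_eq_same]
  push_cast
  ring

lemma degIdx_pred (α : Fin 3 → ℕ) (s : Fin 3) (h : α s ≠ 0) :
    degIdx (α - Pi.single s 1) + 1 = degIdx α := by
  unfold degIdx
  fin_cases s <;> simp at h ⊢ <;> omega

theorem coeA_eq_explicit (Λ γ : ℝ) (hΛ : 0 < Λ) (hγ : γ > -5) (α lam kap : Fin 3 → ℕ) :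
    coeA Λ γ α lam kap =
      (2 : ℝ) ^ ((γ + 3 - (degIdx α : ℝ)) / 2) *
        ∑ s : Fin 3, ∑ t : Fin 3, ∑ p ∈ idxLt (degIdx α),
          if Pi.single s 1 + p ≤ α ∧ p ≤ lam + kap + Pi.single t 1 then
            (Λ / (multiFact (α - Pi.single s 1 - p) : ℝ)) *
              (aMulti p (lam + kap + Pi.single t 1 - p) (kap + Pi.single t 1) lam -
                aMulti p (lam + kap + Pi.single t 1 - p) lam (kap + Pi.single t 1)) *
              Bcoe γ s t (lam + kap + Pi.single t 1 - p) (α - Pi.single s 1 - p)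
          else 0 := by
  rw [coeA_eq_J Λ γ hΛ hγ, Finset.mul_sum, Finset.mul_sum]
  refine Finset.sum_congr rfl fun s _ => ?_
  rw [Finset.mul_sum, Finset.mul_sum]
  refine Finset.sum_congr rfl fun t _ => ?_
  by_cases hs : α s = 0
  · rw [hs]
    simp only [Nat.cast_zero, zero_mul, mul_zero]
    symm
    refine mul_eq_zero_of_right _ (Finset.sum_eq_zero fun p _ => if_neg ?_)
    rintro ⟨h, _⟩
    have := h s
    simp [hs] at this
  · have c1 : lam + (kap + Pi.single t 1) = lam + kap + Pi.single t 1 := (add_assoc _ _ _).symm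
    have c2 : (kap + Pi.single t 1) + lam = lam + kap + Pi.single t 1 := by
      rw [add_comm, c1]
    have hα := multiFact_pred α s hs
    have hd := degIdx_pred α s hs
    have hβ : (multiFact (α - Pi.single s 1) : ℝ) ≠ 0 := by unfold multiFact; positivity
    have hs' : (α s : ℝ) ≠ 0 := by exact_mod_cast hs
    have hpow : (γ + 3 - (degIdx α : ℝ)) / 2 = (γ + 2 - (degIdx (α - Pi.single s 1) : ℝ)) / 2 := by
      rw [← hd]; push_cast; ring
    rw [Jint_Aker Λ γ hΛ hγ, Jint_Aker Λ γ hΛ hγ, c1, c2, hα, hpow, ← mul_sub, ← Finset.sum_sub_distrib,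
      hd]
    rw [show ∀ a b c d : ℝ, 1 / (a * b) * (a * (c * b * d)) = (a * b) / (a * b) * (c * d) by
      intros; ring, div_self (mul_ne_zero hs' hβ), one_mul]
    congr 1
    refine Finset.sum_congr rfl fun p _ => ?_
    have hiff : (Pi.single s 1 + p ≤ α) ↔ p ≤ α - Pi.single s 1 := by
      have : ∀ i, (Pi.single s 1 : Fin 3 → ℕ) i ≤ α i := by
        intro i
        by_cases hi : i = s
        · subst hi; simp; omega
        · simp [Pi.single_eq_of_ne hi]
      simp only [Pi.le_def, Pi.add_apply, Pi.sub_apply]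
      refine forall_congr' fun i => ?_
      have := this i
      omega
    by_cases hc : Pi.single s 1 + p ≤ α ∧ p ≤ lam + kap + Pi.single t 1
    · have hc' := hc
      rw [hiff] at hc'
      rw [if_pos hc, if_pos hc', if_pos hc']
      ring
    · have hc' := hc
      rw [hiff] at hc'
      rw [if_neg hc, if_neg hc', if_neg hc', sub_zero]
end
end

section
/- For all integers l₁, l₂ ≥ 0 and m₁ ∈ {−l₁,…,l₁}, m₂ ∈ {−l₂,…,l₂}, the spherical-surface integral F_{33}(l₁, m₁, l₂, m₂) = ∫_{S²} n₃² Y_{l₁}^{m₁}(n) Y_{l₂}^{m₂}(n) dn satisfies F_{33}(l₁, m₁, l₂, m₂) = (−1)^{m₂} Σ_{k,j ∈ {0,1}} η_{δ_{0k}+(−1)^k l₂, m₂}^{0} · η_{(−1)^j l₁ + δ_{0j}, m₁}^{0} · δ_{l₁+δ_{1k}−δ_{1j}, l₂−δ_{1k}+δ_{1j}} · δ_{m₁, −m₂}, where n₃ is the third component of the unit vector n and δ denotes the Kronecker delta. -/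
open MeasureTheory Real
open scoped BigOperators Classical

noncomputable section

open Polynomial in
/-- The functional `p ↦ ∫_{-1}^1 p`. -/
def Lint : ℝ[X] →ₗ[ℝ] ℝ where
  toFun p := ∫ x in (-1 : ℝ)..1, p.eval x
  map_add' p q := by
    simp only [eval_add]
    exact intervalIntegral.integral_add (p.continuous.intervalIntegrable _ _)
      (q.continuous.intervalIntegrable _ _)
  map_smul' c p := by
    simp [eval_smul]

open Polynomial in
theorem Lint_deriv (p : ℝ[X]) : Lint (derivative p) = p.eval 1 - p.eval (-1) := by
  show ∫ x in (-1 : ℝ)..1, (derivative p).eval x = _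
  exact intervalIntegral.integral_eq_sub_of_hasDerivAt (fun x _ => p.hasDerivAt x)
    ((derivative p).continuous.intervalIntegrable _ _)

open Polynomial in
theorem Lint_shift (n : ℕ) : ∀ (p q : ℝ[X]),
    (∀ j < n, (derivative^[j] q).eval 1 = 0 ∧ (derivative^[j] q).eval (-1) = 0) →
    Lint (derivative^[n] p * q) = (-1) ^ n * Lint (p * derivative^[n] q) := by
  induction n with
  | zero => intro p q _; simp
  | succ n ih =>
    intro p q h
    rw [Function.iterate_succ_apply, ih (derivative p) q (fun j hj => h j (by omega)),
      Function.iterate_succ_apply']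
    have h0 := Lint_deriv (p * derivative^[n] q)
    rw [derivative_mul, map_add, eval_mul, eval_mul, (h n (by omega)).1, (h n (by omega)).2] at h0
    rw [pow_succ]
    linear_combination (-1) ^ n * h0

open Polynomial in
/-- `u_l = (x²-1)^l / (2^l l!)`. -/
def Upol (l : ℕ) : ℝ[X] := C (1 / (2 ^ l * (l.factorial : ℝ))) * (X ^ 2 - 1) ^ l

open Polynomial in
theorem Upol_deriv (l : ℕ) : derivative (Upol (l + 1)) = Upol l * X := by
  have h : (1 / (2 ^ l * (l.factorial : ℝ))) =
      (1 / (2 ^ (l + 1) * ((l + 1).factorial : ℝ))) * (2 * (l + 1)) := by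
    rw [Nat.factorial_succ]; push_cast
    have : (l.factorial : ℝ) ≠ 0 := by positivity
    field_simp
    ring
  unfold Upol
  rw [h, derivative_C_mul, derivative_pow]
  simp only [map_mul, map_add, map_one, map_natCast, C_ofNat, derivative_sub, derivative_X_pow, derivative_one,
    Nat.add_sub_cancel, Nat.cast_add, Nat.cast_one, Nat.cast_ofNat]
  ring

open Polynomial in
theorem Upol_sq (l : ℕ) : Upol l * X ^ 2 = C (2 * (l + 1) : ℝ) * Upol (l + 1) + Upol l := by
  have h : (1 / (2 ^ l * (l.factorial : ℝ))) =
      (1 / (2 ^ (l + 1) * ((l + 1).factorial : ℝ))) * (2 * (l + 1)) := by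
    rw [Nat.factorial_succ]; push_cast
    have : (l.factorial : ℝ) ≠ 0 := by positivity
    field_simp
    ring
  unfold Upol
  rw [h]
  simp only [map_mul, map_add, map_one, map_natCast, C_ofNat]
  ring

open Polynomial in
theorem Upol_degree (l : ℕ) : (Upol l).natDegree ≤ 2 * l := by
  unfold Upol
  refine natDegree_C_mul_le _ _ |>.trans ?_
  refine natDegree_pow_le.trans ?_
  have : (X ^ 2 - 1 : ℝ[X]).natDegree ≤ 2 := by compute_degree
  nlinarith

open Polynomial in
theorem Upol_vanish (l j : ℕ) (h : j < l) :
    (derivative^[j] (Upol l)).eval 1 = 0 ∧ (derivative^[j] (Upol l)).eval (-1) = 0 := by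
  unfold Upol
  rw [iterate_derivative_C_mul]
  obtain ⟨r, hr⟩ := pow_sub_dvd_iterate_derivative_pow (X ^ 2 - 1 : ℝ[X]) l j
  rw [hr]
  have : l - j ≠ 0 := by omega
  simp [this]

open Polynomial in
theorem Upol_rec (l a : ℕ) :
    C (2 * l + 3 : ℝ) * (X * derivative^[a + 1] (Upol (l + 1))) =
      C (2 * l + 2 - a : ℝ) * derivative^[a + 2] (Upol (l + 2)) +
        C (a + 1 : ℝ) * derivative^[a] (Upol l) := by
  have e1 : derivative^[a + 2] (Upol (l + 2)) =
      derivative^[a + 1] (Upol (l + 1)) * X + (a + 1 : ℕ) • derivative^[a] (Upol (l + 1)) := by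
    rw [Function.iterate_succ_apply, Upol_deriv, iterate_derivative_mul_X]; simp
  have e2 : derivative^[a + 1] (Upol (l + 1)) * X + a • derivative^[a] (Upol (l + 1)) =
      C (2 * (l + 1) : ℝ) * derivative^[a] (Upol (l + 1)) + derivative^[a] (Upol l) := by
    rw [← iterate_derivative_derivative_mul_X, Upol_deriv, mul_assoc, ← sq, Upol_sq,
      iterate_map_add, iterate_derivative_C_mul]
  rw [e1]
  simp only [nsmul_eq_mul, map_mul, map_add, map_sub, map_one, map_natCast, C_ofNat,
    Nat.cast_add, Nat.cast_one] at e2 ⊢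
  linear_combination ((a : ℝ[X]) + 1) * e2

open Polynomial in
theorem Upol_rec0 (l : ℕ) : X * Upol l = derivative (Upol (l + 1)) := by
  rw [Upol_deriv, mul_comm]

open Polynomial in
theorem leg_orth_lt (l k : ℕ) (h : l < k) :
    Lint (derivative^[l] (Upol l) * derivative^[k] (Upol k)) = 0 := by
  have := Lint_shift k (derivative^[l] (Upol l)) (Upol k) (fun j hj => Upol_vanish k j hj)
  rw [← Function.iterate_add_apply, iterate_derivative_eq_zero
    (lt_of_le_of_lt (Upol_degree l) (by omega)), zero_mul, map_zero] at this
  have h2 : ((-1 : ℝ)) ^ k ≠ 0 := by positivity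
  simpa using this.symm

open Polynomial in
theorem leg_orth_ne (l k : ℕ) (h : l ≠ k) :
    Lint (derivative^[l] (Upol l) * derivative^[k] (Upol k)) = 0 := by
  rcases lt_or_gt_of_ne h with h | h
  · exact leg_orth_lt l k h
  · rw [mul_comm]; exact leg_orth_lt k l h

open Polynomial in
theorem Lint_C_mul (c : ℝ) (p : ℝ[X]) : Lint (C c * p) = c * Lint p := by
  rw [← smul_eq_C_mul, map_smul, smul_eq_mul]

open Polynomial in
theorem leg_norm (l : ℕ) :
    Lint (derivative^[l] (Upol l) * derivative^[l] (Upol l)) = 2 / (2 * l + 1) := by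
  induction l with
  | zero =>
    simp only [Upol, Function.iterate_zero, id]
    show ∫ x in (-1 : ℝ)..1, _ = _
    norm_num
  | succ l ih =>
    have hB := Upol_rec l l
    have hB2 : (2 * l + 3 : ℝ) * Lint ((X * derivative^[l + 1] (Upol (l + 1))) * derivative^[l] (Upol l)) = (l + 1 : ℝ) * (2 / (2 * l + 1)) := by
      rw [← ih, ← Lint_C_mul, ← Lint_C_mul, ← mul_assoc, hB, add_mul, map_add, mul_assoc,
        Lint_C_mul, leg_orth_ne (l + 2) l (by omega), mul_assoc]
      simp
    have hA : (2 * l + 1 : ℝ) * Lint ((X * derivative^[l] (Upol l)) * derivative^[l + 1] (Upol (l + 1)))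
        = (l + 1 : ℝ) * Lint (derivative^[l + 1] (Upol (l + 1)) * derivative^[l + 1] (Upol (l + 1))) := by
      cases l with
      | zero => simp [Upol_rec0]
      | succ k =>
        have h := Upol_rec k k
        rw [← Lint_C_mul, ← Lint_C_mul, ← mul_assoc]
        have e : C (2 * ((k + 1 : ℕ) : ℝ) + 1) = C (2 * k + 3 : ℝ) := by push_cast; congr 1; ring
        rw [e, h, add_mul, map_add, mul_assoc (C (k + 1 : ℝ)), Lint_C_mul (k + 1 : ℝ),
          leg_orth_ne k (k + 1 + 1) (by omega)]
        have e : C (2 * (k : ℝ) + 2 - k) = C (((k + 1 : ℕ) : ℝ) + 1) := by push_cast; congr 1; ring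
        rw [e, mul_assoc, mul_zero, add_zero]
    have hc : (X * derivative^[l] (Upol l)) * derivative^[l + 1] (Upol (l + 1)) =
      (X * derivative^[l + 1] (Upol (l + 1))) * derivative^[l] (Upol l) := by ring
    rw [hc] at hA
    have h1 : (2 * l + 1 : ℝ) ≠ 0 := by positivity
    have h2 : (2 * l + 3 : ℝ) ≠ 0 := by positivity
    have h3 : (l + 1 : ℝ) ≠ 0 := by positivity
    have h4 : (2 * ((l + 1 : ℕ) : ℝ) + 1) ≠ 0 := by positivity
    rw [eq_div_iff h4]
    push_cast
    apply mul_left_cancel₀ h3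
    field_simp at hB2
    linear_combination (-(2 * l + 3 : ℝ)) * hA + hB2

open Polynomial in
theorem orth (l k a b a' b' : ℕ) (h1 : a + b = 2 * l) (h2 : a' + b' = 2 * k)
    (h3 : a + k = a' + l) :
    Lint (derivative^[a] (Upol l) * derivative^[b'] (Upol k)) =
      if l = k then (-1 : ℝ) ^ (a + l) * (2 / (2 * l + 1)) else 0 := by
  have key : Lint (derivative^[a] (Upol l) * derivative^[b'] (Upol k)) =
      (-1) ^ (a + l) * Lint (derivative^[l] (Upol l) * derivative^[k] (Upol k)) := by
    rcases le_total l a with h | h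
    · obtain ⟨n, rfl⟩ := Nat.exists_eq_add_of_le h
      have hk : k = n + b' := by omega
      have := Lint_shift n (derivative^[l] (Upol l)) (derivative^[b'] (Upol k)) (fun j hj => by
        rw [← Function.iterate_add_apply]; exact Upol_vanish _ _ (by omega))
      rw [← Function.iterate_add_apply, ← Function.iterate_add_apply, ← hk, add_comm n l] at this
      rw [this]; congr 1
      rw [show l + n + l = n + 2 * l by ring, pow_add, pow_mul]; simp
    · obtain ⟨n, rfl⟩ := Nat.exists_eq_add_of_le h
      have hk : b' = n + k := by omega
      have := Lint_shift n (derivative^[k] (Upol k)) (derivative^[a] (Upol (a + n))) (fun j hj => by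
        rw [← Function.iterate_add_apply]; exact Upol_vanish _ _ (by omega))
      rw [← Function.iterate_add_apply, ← Function.iterate_add_apply, ← hk, add_comm n a] at this
      rw [mul_comm, this, mul_comm (derivative^[k] (Upol k))]; congr 1
      rw [show a + (a + n) = n + 2 * a by ring, pow_add, pow_mul]; simp
  rw [key]
  split_ifs with h
  · subst h; rw [leg_norm]
  · rw [leg_orth_ne l k h, mul_zero]

/-- normalisation constant with a = l + m, b = l - m -/
def Ncst (a b : ℕ) : ℝ := Real.sqrt ((a + b + 1) / (4 * π) * b.factorial / a.factorial)

def ecst (a b : ℕ) : ℝ := Real.sqrt ((a * b : ℝ) / ((a + b - 1) * (a + b + 1)))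

theorem ecst_comm (a b : ℕ) : ecst a b = ecst b a := by
  unfold ecst; congr 1; ring

theorem N_up (a b : ℕ) :
    Ncst a b * ((b + 1) / (a + b + 1)) = ecst (a + 1) (b + 1) * Ncst (a + 1) (b + 1) := by
  unfold Ncst ecst
  have h0 : (0 : ℝ) ≤ (b + 1) / (a + b + 1) := by positivity
  rw [← Real.sqrt_mul_self h0, ← Real.sqrt_mul (by positivity), ← Real.sqrt_mul (by
    push_cast
    have : (a + 1 + (b + 1) - 1 : ℝ) = a + b + 1 := by ring
    rw [this]; positivity), Nat.factorial_succ, Nat.factorial_succ]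
  congr 1
  push_cast
  have : (a + 1 + (b + 1) - 1 : ℝ) = a + b + 1 := by ring
  rw [this]
  have := Real.pi_pos
  have : (a.factorial : ℝ) ≠ 0 := by positivity
  have : (a + b + 1 : ℝ) ≠ 0 := by positivity
  have : (a + 1 + (b + 1) + 1 : ℝ) ≠ 0 := by positivity
  field_simp

theorem N_down (a b : ℕ) :
    Ncst (a + 1) (b + 1) * ((a + 1) / (a + b + 3)) = ecst (a + 1) (b + 1) * Ncst a b := by
  unfold Ncst ecst
  have h0 : (0 : ℝ) ≤ (a + 1) / (a + b + 3) := by positivity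
  rw [← Real.sqrt_mul_self h0, ← Real.sqrt_mul (by positivity), ← Real.sqrt_mul (by
    push_cast
    have : (a + 1 + (b + 1) - 1 : ℝ) = a + b + 1 := by ring
    rw [this]; positivity), Nat.factorial_succ, Nat.factorial_succ]
  congr 1
  push_cast
  have : (a + 1 + (b + 1) - 1 : ℝ) = a + b + 1 := by ring
  rw [this]
  have : (a + 1 + (b + 1) + 1 : ℝ) = a + b + 3 := by ring
  rw [this]
  have := Real.pi_pos
  have : (a.factorial : ℝ) ≠ 0 := by positivity
  have : (a + b + 1 : ℝ) ≠ 0 := by positivity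
  have : (a + b + 3 : ℝ) ≠ 0 := by positivity
  field_simp

theorem N_mul (a b : ℕ) : Ncst a b * Ncst b a = (a + b + 1) / (4 * π) := by
  unfold Ncst
  rw [← Real.sqrt_mul (by positivity)]
  have := Real.pi_pos
  rw [show ((a + b + 1) / (4 * π) * b.factorial / a.factorial * ((b + a + 1) / (4 * π) * a.factorial / b.factorial) : ℝ)
    = ((a + b + 1) / (4 * π)) * ((a + b + 1) / (4 * π)) by field_simp; ring]
  exact Real.sqrt_mul_self (by positivity)

open Polynomial in
def Ypol (l a b : ℕ) : ℝ[X] := C (Ncst a b) * derivative^[a] (Upol l)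

open Polynomial in
theorem Y_orth (l k a b a' b' : ℕ) (h1 : a + b = 2 * l) (h2 : a' + b' = 2 * k)
    (h3 : a + k = a' + l) :
    Lint (Ypol l a b * Ypol k b' a') =
      if l = k then (-1 : ℝ) ^ (a + l) / (2 * π) else 0 := by
  unfold Ypol
  rw [show C (Ncst a b) * derivative^[a] (Upol l) * (C (Ncst b' a') * derivative^[b'] (Upol k)) =
    C (Ncst a b * Ncst b' a') * (derivative^[a] (Upol l) * derivative^[b'] (Upol k)) by
      rw [C_mul]; ring, Lint_C_mul, orth l k a b a' b' h1 h2 h3]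
  split_ifs with h
  · subst h
    obtain rfl : a = a' := by omega
    obtain rfl : b = b' := by omega
    rw [N_mul]
    have e : (a + b : ℝ) = 2 * l := by exact_mod_cast h1
    rw [e]
    have := Real.pi_pos
    field_simp
    ring
  · simp

theorem ecst_zero_left (b : ℕ) : ecst 0 b = 0 := by simp [ecst]
theorem ecst_zero_right (b : ℕ) : ecst b 0 = 0 := by simp [ecst]

open Polynomial in
theorem Y_rec (l a b : ℕ) (h : a + b = 2 * l) :
    X * Ypol l a b = C (ecst (a + 1) (b + 1)) * Ypol (l + 1) (a + 1) (b + 1) +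
      C (ecst a b) * Ypol (l - 1) (a - 1) (b - 1) := by
  unfold Ypol
  rw [← mul_assoc (C (ecst _ _)), ← C_mul, ← N_up]
  cases a with
  | zero =>
    rw [ecst_zero_left]
    have : ((b : ℝ) + 1) / ((0 : ℕ) + b + 1) = 1 := by
      push_cast; rw [zero_add]; exact div_self (by positivity)
    rw [this]
    simp only [Function.iterate_zero, id, zero_add, Function.iterate_one, ← Upol_rec0, mul_one, map_zero, zero_mul, add_zero]
    ring
  | succ a =>
    cases l with
    | zero => omega
    | succ l =>
      have hr := Upol_rec l a
      have e : (a + 1 + b : ℝ) = 2 * l + 2 := by exact_mod_cast h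
      have hne : (2 * l + 3 : ℝ) ≠ 0 := by positivity
      have hr' : X * derivative^[a + 1] (Upol (l + 1)) =
        C ((2 * l + 2 - a) / (2 * l + 3) : ℝ) * derivative^[a + 2] (Upol (l + 2)) +
        C ((a + 1) / (2 * l + 3) : ℝ) * derivative^[a] (Upol l) := by
        apply mul_left_cancel₀ (C_ne_zero.mpr hne)
        rw [hr, mul_add, ← mul_assoc, ← mul_assoc, ← C_mul, ← C_mul, mul_div_cancel₀ _ hne,
          mul_div_cancel₀ _ hne]
      rw [← mul_assoc, mul_comm X, mul_assoc, hr', mul_add, ← mul_assoc, ← mul_assoc, ← C_mul, ← C_mul]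
      congr 1
      · congr 3
        push_cast
        congr 1
        · linear_combination -e
        · linear_combination -e
      · rw [← mul_assoc, ← C_mul]
        simp only [Nat.add_sub_cancel]
        cases b with
        | zero =>
          rw [iterate_derivative_eq_zero (lt_of_le_of_lt (Upol_degree l) (by omega))]
          simp
        | succ b =>
          rw [Nat.add_sub_cancel, ← N_down]
          congr 4
          push_cast at e
          linear_combination -e

open Polynomial in
theorem final_poly (l k a b a' b' : ℕ) (h1 : a + b = 2 * l) (h2 : a' + b' = 2 * k)
    (h3 : a + k = a' + l) :
    Lint ((X * Ypol l a b) * (X * Ypol k b' a')) =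
      (-1) ^ (a + l) / (2 * π) *
      (ecst (a + 1) (b + 1) * ecst (a' + 1) (b' + 1) * (if l = k then 1 else 0) +
       ecst (a + 1) (b + 1) * ecst a' b' * (if l + 2 = k then 1 else 0) +
       ecst a b * ecst (a' + 1) (b' + 1) * (if l = k + 2 then 1 else 0) +
       ecst a b * ecst a' b' * (if l = k then 1 else 0)) := by
  have sg : ∀ n : ℕ, (-1 : ℝ) ^ (n + 2) = (-1) ^ n := fun n => by rw [pow_add]; simp
  rw [Y_rec l a b h1, Y_rec k b' a' (by omega)]
  have e1 := Y_orth (l + 1) (k + 1) (a + 1) (b + 1) (a' + 1) (b' + 1) (by omega) (by omega) (by omega)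
  have e2 : ecst a' b' * Lint (Ypol (l + 1) (a + 1) (b + 1) * Ypol (k - 1) (b' - 1) (a' - 1)) =
     ecst a' b' * ((-1) ^ (a + l) / (2 * π) * (if l + 2 = k then 1 else 0)) := by
    rcases Nat.eq_zero_or_pos a' with h | ha
    · rw [h, ecst_zero_left]; simp
    rcases Nat.eq_zero_or_pos b' with h | hb
    · rw [h, ecst_zero_right]; simp
    rw [Y_orth _ _ _ _ _ _ (by omega) (by omega) (by omega)]
    have : (l + 1 = k - 1) = (l + 2 = k) := by apply propext; omega
    rw [show a + 1 + (l + 1) = a + l + 2 by ring, sg]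
    simp only [this]
    split_ifs <;> simp
  have e3 : ecst a b * Lint (Ypol (l - 1) (a - 1) (b - 1) * Ypol (k + 1) (b' + 1) (a' + 1)) =
     ecst a b * ((-1) ^ (a + l) / (2 * π) * (if l = k + 2 then 1 else 0)) := by
    rcases Nat.eq_zero_or_pos a with h | ha
    · rw [h, ecst_zero_left]; simp
    rcases Nat.eq_zero_or_pos b with h | hb
    · rw [h, ecst_zero_right]; simp
    rw [Y_orth _ _ _ _ _ _ (by omega) (by omega) (by omega)]
    have : (l - 1 = k + 1) = (l = k + 2) := by apply propext; omega
    rw [← sg (a - 1 + (l - 1)), show a - 1 + (l - 1) + 2 = a + l by omega]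
    simp only [this]
    split_ifs <;> simp
  have e4 : ecst a b * ecst a' b' * Lint (Ypol (l - 1) (a - 1) (b - 1) * Ypol (k - 1) (b' - 1) (a' - 1)) =
     ecst a b * ecst a' b' * ((-1) ^ (a + l) / (2 * π) * (if l = k then 1 else 0)) := by
    rcases Nat.eq_zero_or_pos a with h | ha
    · rw [h, ecst_zero_left]; simp
    rcases Nat.eq_zero_or_pos b with h | hb
    · rw [h, ecst_zero_right]; simp
    rcases Nat.eq_zero_or_pos a' with h | ha'
    · rw [h, ecst_zero_left]; simp
    rcases Nat.eq_zero_or_pos b' with h | hb'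
    · rw [h, ecst_zero_right]; simp
    rw [Y_orth _ _ _ _ _ _ (by omega) (by omega) (by omega)]
    have : (l - 1 = k - 1) = (l = k) := by apply propext; omega
    rw [← sg (a - 1 + (l - 1)), show a - 1 + (l - 1) + 2 = a + l by omega]
    simp only [this]
    split_ifs <;> simp
  rw [show a + 1 + (l + 1) = a + l + 2 by ring, sg] at e1
  have e1' : Lint (Ypol (l + 1) (a + 1) (b + 1) * Ypol (k + 1) (b' + 1) (a' + 1)) =
     ((-1) ^ (a + l) / (2 * π) * (if l = k then 1 else 0)) := by
    rw [e1]; simp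
  rw [ecst_comm b' a', ecst_comm (b' + 1) (a' + 1)]
  generalize Ypol (l + 1) (a + 1) (b + 1) = p1 at *
  generalize Ypol (l - 1) (a - 1) (b - 1) = p2 at *
  generalize Ypol (k + 1) (b' + 1) (a' + 1) = q1 at *
  generalize Ypol (k - 1) (b' - 1) (a' - 1) = q2 at *
  generalize ecst (a + 1) (b + 1) = c1 at *
  generalize ecst (a' + 1) (b' + 1) = d1 at *
  generalize ecst a b = c2 at *
  generalize ecst a' b' = d2 at *
  rw [show (C c1 * p1 + C c2 * p2) * (C d1 * q1 + C d2 * q2) = C (c1 * d1) * (p1 * q1) +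
    C (c1 * d2) * (p1 * q2) + C (c2 * d1) * (p2 * q1) + C (c2 * d2) * (p2 * q2) by
      simp only [C_mul]; ring]
  simp only [map_add, Lint_C_mul]
  linear_combination c1 * d1 * e1' + c1 * e2 + d1 * e3 + e4
theorem exp_arg (m : ℤ) (s φ : ℝ) (hs : 0 < s) :
    Complex.exp (Complex.I * m * (Complex.arg (((s * Real.cos φ : ℝ) : ℂ) +
      ((s * Real.sin φ : ℝ) : ℂ) * Complex.I) : ℝ)) = Complex.exp (Complex.I * m * φ) := by
  have e : ((s * Real.cos φ : ℝ) : ℂ) + ((s * Real.sin φ : ℝ) : ℂ) * Complex.I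
      = s * Complex.exp (φ * Complex.I) := by
    rw [Complex.exp_mul_I]; push_cast; ring
  rw [e]
  have h := Complex.norm_mul_exp_arg_mul_I (s * Complex.exp (φ * Complex.I))
  have hn : ‖(s : ℂ) * Complex.exp (φ * Complex.I)‖ = s := by
    rw [norm_mul, Complex.norm_exp_ofReal_mul_I, mul_one, Complex.norm_real, Real.norm_of_nonneg hs.le]
  rw [hn] at h
  have h' := mul_left_cancel₀ (Complex.ofReal_ne_zero.mpr hs.ne') h
  have key : ∀ t : ℝ, Complex.exp (Complex.I * m * t) = Complex.exp (t * Complex.I) ^ m := fun t => by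
    rw [← Complex.exp_int_mul]; congr 1; ring
  rw [key, key, h']

theorem int_exp (n : ℤ) :
    (∫ φ in (0 : ℝ)..(2 * π), Complex.exp (Complex.I * n * φ)) = if n = 0 then 2 * (π : ℂ) else 0 := by
  split_ifs with h
  · subst h; simp
  · rw [integral_exp_mul_complex (by simp [h])]
    have : Complex.exp (Complex.I * n * ((2 * π : ℝ) : ℂ)) = 1 := by
      rw [show Complex.I * n * ((2 * π : ℝ) : ℂ) = n * (2 * π * Complex.I) by push_cast; ring]
      exact Complex.exp_int_mul_two_pi_mul_I n
    rw [this]; simp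

open Polynomial in
theorem iterD (p : ℝ[X]) (n : ℕ) (x : ℝ) :
    iteratedDeriv n (fun y => p.eval y) x = (derivative^[n] p).eval x := by
  induction n generalizing x with
  | zero => simp
  | succ n ih =>
    rw [iteratedDeriv_succ, Function.iterate_succ_apply']
    rw [show iteratedDeriv n (fun y => p.eval y) = fun x => (derivative^[n] p).eval x from funext ih]
    exact Polynomial.deriv _

open Polynomial in
theorem assocLegendre_eq (l : ℕ) (m : ℤ) (x : ℝ) :
    assocLegendre l m x = (-1 : ℝ) ^ m * (1 - x ^ 2) ^ ((m : ℝ) / 2) *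
      (derivative^[((l : ℤ) + m).toNat] (Upol l)).eval x := by
  unfold assocLegendre Upol
  rw [iterate_derivative_C_mul, eval_mul, eval_C, ← iterD]
  simp only [eval_pow, eval_sub, eval_X, eval_one]
  ring

theorem eta_eq (l : ℕ) (m : ℤ) (a b : ℕ) (ha : (a : ℤ) = l + m) (hb : (b : ℤ) = l - m) :
    eta l m 0 = ecst a b := by
  have ha' : (a : ℝ) = l + m := by exact_mod_cast ha
  have hb' : (b : ℝ) = l - m := by exact_mod_cast hb
  unfold eta ecst kdZ
  rw [ha', hb']
  congr 1
  norm_num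
  congr 1 <;> ring

theorem eta_neg (l m : ℤ) : eta (-l) m 0 = eta l m 0 := by
  unfold eta kdZ
  congr 1
  norm_num
  congr 1 <;> ring

open Polynomial in
theorem theta_int (p : ℝ[X]) :
    (∫ θ in (0 : ℝ)..π, p.eval (Real.cos θ) * Real.sin θ) = Lint p := by
  have h := intervalIntegral.integral_comp_mul_deriv (a := 0) (b := π) (f := Real.cos)
    (f' := fun x => - Real.sin x) (g := fun x => p.eval x)
    (fun x _ => Real.hasDerivAt_cos x) (by fun_prop) p.continuous
  simp only [Real.cos_zero, Real.cos_pi, Function.comp, mul_neg, intervalIntegral.integral_neg] at h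
  rw [intervalIntegral.integral_symm (-1 : ℝ) 1] at h
  exact neg_injective h

/-- explicit formula for F₃₃(l₁,m₁,l₂,m₂) = ∫_{S²} n₃² Y_{l₁}^{m₁} Y_{l₂}^{m₂} dn. -/
theorem F33_explicit (l1 l2 : ℕ) (m1 m2 : ℤ) (h1 : m1.natAbs ≤ l1) (h2 : m2.natAbs ≤ l2) :
    sphereIntegral (fun n => ((n 2 ^ 2 : ℝ) : ℂ) * sphHarm l1 m1 n * sphHarm l2 m2 n) =
      (((-1 : ℝ) ^ m2 *
        ∑ k ∈ Finset.range 2, ∑ j ∈ Finset.range 2,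
          eta ((if k = 0 then 1 else 0) + (-1) ^ k * l2) m2 0 *
            eta ((-1) ^ j * l1 + (if j = 0 then 1 else 0)) m1 0 *
            (if (l1 : ℤ) + (if k = 1 then 1 else 0) - (if j = 1 then 1 else 0) =
                (l2 : ℤ) - (if k = 1 then 1 else 0) + (if j = 1 then 1 else 0)
              then (1 : ℝ) else 0) *
            (if m1 = -m2 then (1 : ℝ) else 0) : ℝ) : ℂ) := by
  obtain ⟨a, ha⟩ : ∃ a : ℕ, (a : ℤ) = l1 + m1 := ⟨(l1 + m1).toNat, by omega⟩
  obtain ⟨b, hb⟩ : ∃ b : ℕ, (b : ℤ) = l1 - m1 := ⟨(l1 - m1).toNat, by omega⟩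
  obtain ⟨b', hb'⟩ : ∃ b' : ℕ, (b' : ℤ) = l2 + m2 := ⟨(l2 + m2).toNat, by omega⟩
  obtain ⟨a', ha'⟩ : ∃ a' : ℕ, (a' : ℤ) = l2 - m2 := ⟨(l2 - m2).toNat, by omega⟩
  have hN1 : (2 * l1 + 1 : ℝ) = a + b + 1 := by
    have : (2 * l1 + 1 : ℤ) = a + b + 1 := by omega
    exact_mod_cast this
  have hN2 : (2 * l2 + 1 : ℝ) = b' + a' + 1 := by
    have : (2 * l2 + 1 : ℤ) = b' + a' + 1 := by omega
    exact_mod_cast this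
  have inner : ∀ θ ∈ Set.uIcc (0 : ℝ) π,
      (∫ φ in (0 : ℝ)..(2 * π),
        (fun n : V3 => ((n 2 ^ 2 : ℝ) : ℂ) * sphHarm l1 m1 n * sphHarm l2 m2 n)
          ![Real.sin θ * Real.cos φ, Real.sin θ * Real.sin φ, Real.cos θ] * (Real.sin θ : ℂ)) =
      if m1 = -m2 then ((2 * π * ((((Polynomial.X * Ypol l1 a b) *
        (Polynomial.X * Ypol l2 b' a'))).eval (Real.cos θ) * Real.sin θ) : ℝ) : ℂ) else 0 := by
    intro θ hθ
    rw [Set.uIcc_of_le Real.pi_pos.le] at hθ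
    rcases (Real.sin_nonneg_of_mem_Icc hθ).eq_or_lt with h0 | hs
    · rw [← h0]; simp
    have hpt : ∀ φ : ℝ, (fun n : V3 => ((n 2 ^ 2 : ℝ) : ℂ) * sphHarm l1 m1 n * sphHarm l2 m2 n)
          ![Real.sin θ * Real.cos φ, Real.sin θ * Real.sin φ, Real.cos θ] * (Real.sin θ : ℂ) =
        ((Real.cos θ ^ 2 * (Ncst a b * assocLegendre l1 m1 (Real.cos θ)) *
          (Ncst b' a' * assocLegendre l2 m2 (Real.cos θ)) * Real.sin θ : ℝ) : ℂ) *
          Complex.exp (Complex.I * (m1 + m2 : ℤ) * φ) := by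
      intro φ
      have x0 : (![Real.sin θ * Real.cos φ, Real.sin θ * Real.sin φ, Real.cos θ] : V3) 0 =
        Real.sin θ * Real.cos φ := rfl
      have x1 : (![Real.sin θ * Real.cos φ, Real.sin θ * Real.sin φ, Real.cos θ] : V3) 1 =
        Real.sin θ * Real.sin φ := rfl
      have x2 : (![Real.sin θ * Real.cos φ, Real.sin θ * Real.sin φ, Real.cos θ] : V3) 2 =
        Real.cos θ := rfl
      simp only [sphHarm, x0, x1, x2]
      rw [exp_arg m1 _ φ hs, exp_arg m2 _ φ hs, ← ha, ← hb, ← ha', ← hb', hN1, hN2]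
      simp only [Int.toNat_natCast]
      rw [show Complex.I * ((m1 + m2 : ℤ) : ℂ) * φ = Complex.I * m1 * φ + Complex.I * m2 * φ by
        push_cast; ring, Complex.exp_add]
      unfold Ncst
      push_cast
      ring
    simp only [hpt]
    rw [intervalIntegral.integral_const_mul, int_exp]
    have hc : (m1 + m2 = 0) = (m1 = -m2) := by apply propext; omega
    simp only [hc]
    split_ifs with hm
    · rw [← Complex.ofReal_ofNat, ← Complex.ofReal_mul, ← Complex.ofReal_mul]
      congr 1
      rw [assocLegendre_eq, assocLegendre_eq, ← ha, ← hb']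
      simp only [Int.toNat_natCast, Polynomial.eval_mul, Polynomial.eval_X, Ypol, Polynomial.eval_C]
      have hsq : 1 - Real.cos θ ^ 2 = Real.sin θ ^ 2 := by
        rw [Real.sin_sq]
      have hp : (1 - Real.cos θ ^ 2) ^ ((m1 : ℝ) / 2) * (1 - Real.cos θ ^ 2) ^ ((m2 : ℝ) / 2) = 1 := by
        rw [hsq, ← Real.rpow_add (by positivity), hm]
        push_cast
        rw [show -(m2 : ℝ) / 2 + m2 / 2 = 0 by ring, Real.rpow_zero]
      have hq : (-1 : ℝ) ^ m1 * (-1 : ℝ) ^ m2 = 1 := by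
        rw [← zpow_add₀ (by norm_num), hm]; simp
      generalize (1 - Real.cos θ ^ 2) ^ ((m1 : ℝ) / 2) = A at *
      generalize (1 - Real.cos θ ^ 2) ^ ((m2 : ℝ) / 2) = B at *
      generalize (-1 : ℝ) ^ m1 = A' at *
      generalize (-1 : ℝ) ^ m2 = B' at *
      generalize Polynomial.eval (Real.cos θ) (Polynomial.derivative^[a] (Upol l1)) = P
      generalize Polynomial.eval (Real.cos θ) (Polynomial.derivative^[b'] (Upol l2)) = Q
      linear_combination (Real.cos θ ^ 2 * Ncst a b * P * Ncst b' a' * Q * Real.sin θ * (2 * π)) *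
        (A' * B' * hp + hq)
    · simp
  unfold sphereIntegral
  rw [intervalIntegral.integral_congr inner]
  by_cases hm : m1 = -m2
  · simp only [if_pos hm]
    rw [intervalIntegral.integral_ofReal, intervalIntegral.integral_const_mul, theta_int,
      final_poly l1 l2 a b a' b' (by omega) (by omega) (by omega)]
    congr 1
    have E1 : eta (l1 : ℤ) m1 0 = ecst a b := eta_eq l1 m1 a b ha hb
    have E2 : eta ((l1 : ℤ) + 1) m1 0 = ecst (a + 1) (b + 1) := by
      have := eta_eq (l1 + 1) m1 (a + 1) (b + 1) (by push_cast; omega) (by push_cast; omega)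
      exact_mod_cast this
    have E3 : eta (l2 : ℤ) m2 0 = ecst a' b' := by
      rw [ecst_comm]; exact eta_eq l2 m2 b' a' hb' ha'
    have E4 : eta (1 + (l2 : ℤ)) m2 0 = ecst (a' + 1) (b' + 1) := by
      rw [ecst_comm, add_comm]
      have := eta_eq (l2 + 1) m2 (b' + 1) (a' + 1) (by push_cast; omega) (by push_cast; omega)
      exact_mod_cast this
    have hs : (-1 : ℝ) ^ m2 = (-1) ^ (a + l1) := by
      rw [← zpow_natCast]
      rw [show ((a + l1 : ℕ) : ℤ) = m2 + 2 * (l1 - m2) by push_cast; omega,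
        zpow_add₀ (by norm_num), zpow_mul]
      simp
    have c1 : ((l1 : ℤ) + 1 = l2 - 1) = (l1 + 2 = l2) := by apply propext; omega
    have c2 : ((l1 : ℤ) - 1 = l2 + 1) = (l1 = l2 + 2) := by apply propext; omega
    have c3 : ((l1 : ℤ) + 1 - 1 = l2 - 1 + 1) = (l1 = l2) := by apply propext; omega
    have c4 : ((l1 : ℤ) = l2) = (l1 = l2) := by apply propext; omega
    rw [hs]
    simp only [Finset.sum_range_succ, Finset.sum_range_zero, pow_zero, pow_one, one_mul, neg_one_mul,
      if_true, zero_add, add_zero, sub_zero, one_ne_zero, zero_ne_one, if_false, eta_neg, E1, E2, E3, E4,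
      c1, c2, c3, c4, mul_one]
    have := Real.pi_pos
    field_simp
    ring
  · simp [hm]
end
end

section
/- For all integers l₁, l₂ ≥ 0 and m₁ ∈ {−l₁,…,l₁}, m₂ ∈ {−l₂,…,l₂}, the spherical-surface integral F_{13}(l₁, m₁, l₂, m₂) = ∫_{S²} n₁ n₃ Y_{l₁}^{m₁}(n) Y_{l₂}^{m₂}(n) dn satisfies F_{13}(l₁, m₁, l₂, m₂) = ( (−1)^{m₂+1}/√2 ) Σ_{k,j,l ∈ {0,1}} (−1)^{l+j} η_{δ_{0k}+(−1)^k l₂, m₂}^{0} · η_{(−1)^j l₁ + δ_{0j}, m₁}^{(−1)^l} · δ_{l₁+δ_{1k}−δ_{1j}, l₂−δ_{1k}+δ_{1j}} · δ_{m₁+(−1)^l, −m₂}, where n₁ and n₃ are the first and third components of the unit vector n and δ denotes the Kronecker delta. -/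
open MeasureTheory Real
open scoped BigOperators Classical

noncomputable section

namespace F13

open Polynomial in
/-- Rodrigues polynomial `(X²-1)^l / (2^l l!)`. -/
def R (l : ℕ) : Polynomial ℝ := C (((2:ℝ) ^ l * l.factorial)⁻¹) * (X ^ 2 - 1) ^ l

/-- `R (l-1)`, with the value zero at `l = 0`. -/
def Q : ℕ → Polynomial ℝ
  | 0 => 0
  | l + 1 => R l

/-- `n`-th derivative. -/
abbrev D (n : ℕ) (p : Polynomial ℝ) : Polynomial ℝ := Polynomial.derivative^[n] p

open Polynomial

lemma D_succ (n : ℕ) (p : Polynomial ℝ) : D (n+1) p = derivative (D n p) := by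
  simp [D, Function.iterate_succ_apply']

lemma D_succ' (n : ℕ) (p : Polynomial ℝ) : D (n+1) p = D n (derivative p) := by
  simp [D]

lemma R_zero : R 0 = 1 := by simp [R]

lemma dR (l : ℕ) : derivative (R (l+1)) = X * R l := by
  have h : (((2:ℝ) ^ (l+1) * (l+1).factorial)⁻¹) * (2 * (l+1)) = (((2:ℝ) ^ l * l.factorial)⁻¹) := by
    rw [Nat.factorial_succ]; push_cast; field_simp; ring
  simp only [R]
  rw [← h]
  simp [derivative_pow]
  ring

lemma mulR (l : ℕ) : (X ^ 2 - 1) * R l = C (2 * ((l:ℝ)+1)) * R (l+1) := by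
  have h : (((2:ℝ) ^ (l+1) * (l+1).factorial)⁻¹) * (2 * (l+1)) = (((2:ℝ) ^ l * l.factorial)⁻¹) := by
    rw [Nat.factorial_succ]; push_cast; field_simp; ring
  simp only [R]
  rw [← h]
  simp only [C_mul]
  ring

lemma ddR (l : ℕ) : derivative (derivative (R (l+1))) = C (2*(l:ℝ)+1) * R l + Q l := by
  rw [dR]
  cases l with
  | zero => simp [R_zero, Q]
  | succ l =>
    have h := mulR l
    simp only [derivative_mul, derivative_X, dR, Q]
    simp only [C_mul, C_add, Nat.cast_add, Nat.cast_one] at h ⊢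
    simp only [map_one, map_ofNat] at h ⊢
    linear_combination h

lemma recU (l k : ℕ) : C (2*(l:ℝ)+1) * D k (R l) = D (k+2) (R (l+1)) - D k (Q l) := by
  rw [D_succ', D_succ', ddR]
  simp [D, iterate_map_add, iterate_derivative_C_mul, -map_add, -map_mul]

lemma D_X_mul (k : ℕ) (f : Polynomial ℝ) : D (k+1) (X * f) = X * D (k+1) f + C ((k:ℝ)+1) * D k f := by
  induction k with
  | zero => simp [D]; ring
  | succ k ih =>
    rw [D_succ, ih, D_succ (k+1) f]
    simp [D_succ]
    ring

lemma recX (l k : ℕ) : C (2*(l:ℝ)+1) * (X * D k (R l)) =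
    C (2*(l:ℝ) - k + 1) * D (k+1) (R (l+1)) + C (k:ℝ) * D (k-1) (Q l) := by
  cases k with
  | zero => simp [D, dR]
  | succ k =>
    have h1 : D (k+2) (R (l+1)) = X * D (k+1) (R l) + C ((k:ℝ)+1) * D k (R l) := by
      rw [D_succ', dR, D_X_mul]
    have h2 := recU l k
    simp only [Nat.add_sub_cancel, Nat.cast_add, Nat.cast_one, C_add, C_sub, C_mul] at *
    linear_combination (-C 2 * C (l:ℝ) - C 1) * h1 - (C (k:ℝ) + C 1) * h2

lemma recD (l k : ℕ) : C (2*(l:ℝ)+1) * ((1 - X ^ 2) * D k (R l)) =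
    C ((k:ℝ) * (k-1)) * D (k-2) (Q l) - C ((2*(l:ℝ) - k + 1) * (2*l-k+2)) * D k (R (l+1)) := by
  induction k with
  | zero =>
    have h := mulR l
    simp only [D, Function.iterate_zero, id, Nat.cast_zero, zero_mul, C_0, sub_zero] 
    simp only [C_mul, C_add] at *
    simp only [map_one, map_ofNat] at *
    linear_combination (-2 * C (l:ℝ) - 1) * h
  | succ k ih =>
    have h2 := recX l k
    have h3 := congrArg derivative ih
    have h4 : C ((k:ℝ) * (k-1)) * derivative (D (k-2) (Q l)) = C ((k:ℝ) * (k-1)) * D (k-1) (Q l) := by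
      rcases k with _ | _ | k
      · simp
      · simp
      · simp [D_succ]
    simp only [derivative_mul, derivative_sub, derivative_C, zero_mul, zero_add, derivative_one, derivative_X_pow, ← D_succ] at h3
    rw [D_succ, ← D_succ] at *
    rw [h4] at h3
    have e : k + 1 - 2 = k - 1 := by omega
    rw [e]
    simp only [C_mul, C_add, C_sub, Nat.cast_add, Nat.cast_one] at *
    simp only [map_one, map_ofNat, Nat.cast_ofNat, pow_one, Nat.add_one_sub_one] at *
    linear_combination h3 + 2 * h2

/-- Integral over `[-1,1]`. -/
def J (p : Polynomial ℝ) : ℝ := ∫ x in (-1:ℝ)..1, p.eval x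

lemma J_add (p q : Polynomial ℝ) : J (p + q) = J p + J q := by
  simp only [J, eval_add]
  exact intervalIntegral.integral_add (p.continuous.intervalIntegrable _ _) (q.continuous.intervalIntegrable _ _)

lemma J_C (c : ℝ) (q : Polynomial ℝ) : J (C c * q) = c * J q := by
  simp [J]

lemma J_zero : J 0 = 0 := by simp [J]

lemma J_deriv (p : Polynomial ℝ) : J (derivative p) = p.eval 1 - p.eval (-1) := by
  simp only [J]
  exact intervalIntegral.integral_eq_sub_of_hasDerivAt (fun x _ => p.hasDerivAt x)
    ((derivative p).continuous.intervalIntegrable _ _)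

lemma van (l n : ℕ) (h : n < l) (t : ℝ) (ht : t^2 = 1) : (D n (R l)).eval t = 0 := by
  have h1 : (X - C t) ^ l ∣ R l := by
    have : (X ^ 2 - 1 : Polynomial ℝ) = (X - C t) * (X + C t) := by
      have : (C t)^2 = (1 : Polynomial ℝ) := by rw [← C_pow, ht, C_1]
      linear_combination this
    rw [R, this, mul_pow]
    exact Dvd.dvd.mul_left (Dvd.intro _ rfl) _
  have h2 := pow_sub_dvd_iterate_derivative_of_pow_dvd n h1
  have h3 : (X - C t) ∣ D n (R l) := dvd_trans (dvd_pow_self _ (by omega)) h2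
  exact (dvd_iff_isRoot.mp h3)

lemma shift (l l' m : ℕ) : ∀ a b : ℕ, b + m = l' →
    J (D (a+m) (R l) * D b (R l')) = (-1)^m * J (D a (R l) * D (b+m) (R l')) := by
  induction m with
  | zero => intro a b _; simp
  | succ m ih =>
    intro a b hb
    have h := J_deriv (D (a+m) (R l) * D b (R l'))
    rw [derivative_mul, J_add, eval_mul, eval_mul, van l' b (by omega) 1 (by norm_num),
      van l' b (by omega) (-1) (by norm_num), ← D_succ, ← D_succ] at h
    have h' := ih a (b+1) (by omega)
    rw [h'] at h
    rw [← add_assoc, pow_succ, show b + (m+1) = b+1+m by omega]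
    linarith

lemma D_big (l n : ℕ) (h : 2 * l < n) : D n (R l) = 0 := by
  apply iterate_derivative_eq_zero
  refine lt_of_le_of_lt ?_ h
  unfold R
  compute_degree
  omega

lemma D_top (l : ℕ) : ∃ c : ℝ, D (2*l) (R l) = C c ∧ c * J (R l) = (-1)^l * (2 / (2*l+1)) := by
  induction l with
  | zero => 
    refine ⟨1, by simp [R_zero, D], ?_⟩
    simp [R_zero, J]; norm_num
  | succ l ih =>
    obtain ⟨c, hc, hJ⟩ := ih
    have h := recU l (2*l)
    have hq : D (2*l) (Q l) = 0 := by
      cases l with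
      | zero => simp [Q, D]
      | succ l => exact D_big _ _ (by omega)
    rw [hq, hc, sub_zero, ← C_mul] at h
    refine ⟨_, h.symm, ?_⟩
    have h3 := ddR (l+1)
    have h4 := J_deriv (derivative (R (l+1+1)))
    have v1 := van (l+1+1) 1 (by omega) 1 (by norm_num)
    have v2 := van (l+1+1) 1 (by omega) (-1) (by norm_num)
    simp only [D, Function.iterate_one] at v1 v2
    rw [h3, v1, v2, J_add, J_C] at h4
    simp only [Q] at h4
    have p1 : (2 * (l:ℝ) + 1) ≠ 0 := by positivity
    have p2 : (2 * ((l:ℝ)+1) + 1) ≠ 0 := by positivity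
    push_cast at *
    have h5 : J (R (l+1)) = - J (R l) / (2 * ((l:ℝ)+1) + 1) := by
      field_simp
      linarith
    rw [h5]
    field_simp
    field_simp at hJ
    rw [pow_succ]
    linarith

lemma orth0 (l l' : ℕ) (h : l' ≤ l) : J (D l (R l) * D l' (R l')) =
    if l = l' then 2 / (2*(l:ℝ)+1) else 0 := by
  have h1 := shift l' l l l' 0 (by omega)
  have h2 : J (D l (R l) * D l' (R l')) = (-1)^l * J (D (l'+l) (R l') * D 0 (R l)) := by
    rw [h1, ← mul_assoc, ← mul_pow, zero_add, mul_comm (D l (R l))]; simp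
  rw [h2]
  split_ifs with hl
  · subst hl
    obtain ⟨c, hc, hJ⟩ := D_top l
    rw [← two_mul, hc, J_C]
    simp only [D, Function.iterate_zero, id]
    rw [hJ, ← mul_assoc, ← mul_pow]; simp
  · rw [D_big l' _ (by omega)]; simp [J_zero]

lemma orth0' (l l' : ℕ) : J (D l (R l) * D l' (R l')) =
    if l = l' then 2 / (2*(l:ℝ)+1) else 0 := by
  rcases le_total l' l with h | h
  · exact orth0 l l' h
  · rw [mul_comm, orth0 l' l h]
    by_cases e : l = l'
    · subst e; simp
    · rw [if_neg e, if_neg (Ne.symm e)]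

lemma orth (l l' a b : ℕ) (h : a + b = l + l') : J (D a (R l) * D b (R l')) =
    if l = l' then (-1)^(a+l) * (2 / (2*(l:ℝ)+1)) else 0 := by
  rcases le_total l a with hl | hl
  · obtain ⟨m, rfl⟩ := Nat.exists_eq_add_of_le hl
    rw [shift l l' m l b (by omega), show b + m = l' by omega, orth0']
    split_ifs
    · rw [show l + m + l = 2*l+m by ring, pow_add, pow_mul]; simp
    · simp
  · obtain ⟨m, rfl⟩ := Nat.exists_eq_add_of_le hl
    obtain rfl : b = l' + m := by omega
    rw [mul_comm, shift l' (a+m) m l' a rfl, mul_comm (D l' _), orth0']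
    split_ifs
    · rw [show a + (a + m) = 2*a+m by ring, pow_add, pow_mul]; simp
    · simp

/-- Normalization in terms of `a = l+m`, `c = l-m`. -/
def N (a c : ℕ) : ℝ := Real.sqrt (((a:ℝ)+c+1)/2 * c.factorial / a.factorial)

lemma N_aux (x s : ℝ) (A B : ℝ) (hx : 0 ≤ x) (hs : 0 ≤ s) (h : A * x^2 = s * B) :
    Real.sqrt A * x = Real.sqrt s * Real.sqrt B := by
  rw [← Real.sqrt_mul hs, ← h, mul_comm A, Real.sqrt_mul (sq_nonneg x), Real.sqrt_sq hx, mul_comm]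

lemma N1 (a c : ℕ) : N a c * ((c+1)/(a+c+1)) =
    Real.sqrt (((a:ℝ)+1)*(c+1)/((a+c+1)*(a+c+3))) * N (a+1) (c+1) := by
  apply N_aux <;> try positivity
  simp only [Nat.factorial_succ]; push_cast; field_simp; ring

lemma N2 (a c : ℕ) : N (a+1) (c+1) * ((a+1)/(a+c+3)) =
    Real.sqrt (((a:ℝ)+1)*(c+1)/((a+c+1)*(a+c+3))) * N a c := by
  apply N_aux <;> try positivity
  simp only [Nat.factorial_succ]; push_cast; field_simp; ring

lemma N3 (a c : ℕ) : N a c * (1/(a+c+1)) =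
    Real.sqrt (((a:ℝ)+1)*(a+2)/((a+c+1)*(a+c+3))) * N (a+2) c := by
  apply N_aux <;> try positivity
  simp only [Nat.factorial_succ]; push_cast; field_simp; ring

lemma N4 (a c : ℕ) : N a (c+2) * (1/(a+c+3)) =
    Real.sqrt (((c:ℝ)+1)*(c+2)/((a+c+1)*(a+c+3))) * N a c := by
  apply N_aux <;> try positivity
  simp only [Nat.factorial_succ]; push_cast; field_simp; ring

lemma N5 (a c : ℕ) : N a c * ((c+1)*(c+2)/(a+c+1)) =
    Real.sqrt (((c:ℝ)+1)*(c+2)/((a+c+1)*(a+c+3))) * N a (c+2) := by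
  apply N_aux <;> try positivity
  simp only [Nat.factorial_succ]; push_cast; field_simp; ring

lemma N6 (a c : ℕ) : N (a+2) c * ((a+1)*(a+2)/(a+c+3)) =
    Real.sqrt (((a:ℝ)+1)*(a+2)/((a+c+1)*(a+c+3))) * N a c := by
  apply N_aux <;> try positivity
  simp only [Nat.factorial_succ]; push_cast; field_simp; ring

end F13

namespace F13
open Polynomial

lemma recU' (l a c : ℕ) (h : a + c = 2 * l) : D a (R l) =
    C (1/((a:ℝ)+c+1)) * D (a+2) (R (l+1)) - C (1/((a:ℝ)+c+1)) * D a (Q l) := by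
  have h0 : (a:ℝ) + c = 2 * l := by exact_mod_cast h
  rw [← mul_sub, ← recU, ← mul_assoc, ← C_mul, h0, one_div_mul_cancel (by positivity), C_1, one_mul]

lemma recX' (l a c : ℕ) (h : a + c = 2 * l) : X * D a (R l) =
    C ((c+1)/((a:ℝ)+c+1)) * D (a+1) (R (l+1)) + C (a/((a:ℝ)+c+1)) * D (a-1) (Q l) := by
  have h0 : (a:ℝ) + c = 2 * l := by exact_mod_cast h
  have h1 := congrArg (fun p => C (1/((a:ℝ)+c+1)) * p) (recX l a)
  simp only [mul_add (C _), ← mul_assoc (C _), ← C_mul] at h1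
  rw [← h0, one_div_mul_cancel (by positivity), C_1, one_mul] at h1
  rw [h1]
  congr 3 <;> ring

lemma recD' (l a c : ℕ) (h : a + c = 2 * l) : (1 - X^2) * D a (R l) =
    C ((a:ℝ)*(a-1)/((a:ℝ)+c+1)) * D (a-2) (Q l) -
      C (((c:ℝ)+1)*(c+2)/((a:ℝ)+c+1)) * D a (R (l+1)) := by
  have h0 : (a:ℝ) + c = 2 * l := by exact_mod_cast h
  have h1 := congrArg (fun p => C (1/((a:ℝ)+c+1)) * p) (recD l a)
  simp only [mul_sub (C _) (C _ * _), ← mul_assoc (C _), ← C_mul] at h1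
  rw [← h0, one_div_mul_cancel (by positivity), C_1, one_mul] at h1
  rw [h1]
  congr 3 <;> ring

/-- Normalized polynomial part of the spherical harmonics. -/
def e (l m : ℤ) : Polynomial ℝ :=
  if -l ≤ m ∧ m ≤ l then C (N (l+m).toNat (l-m).toNat) * D (l+m).toNat (R l.toNat) else 0

lemma e_mk (L m : ℤ) (l a c : ℕ) (hL : L = l) (ha : (a:ℤ) = l + m) (hc : (c:ℤ) = l - m) :
    e L m = C (N a c) * D a (R l) := by
  subst hL
  rw [e, if_pos (by omega), ← ha, ← hc]; simp

lemma e_out (L m : ℤ) (h : ¬ (-L ≤ m ∧ m ≤ L)) : e L m = 0 := by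
  rw [e, if_neg h]

lemma cast_l (l a c : ℕ) (m : ℤ) (ha : (a:ℤ) = l + m) (hc : (c:ℤ) = l - m) :
    (l:ℝ) = ((a:ℝ)+c)/2 ∧ (m:ℝ) = ((a:ℝ)-c)/2 := by
  have h1 : (a:ℝ) = l + m := by exact_mod_cast ha
  have h2 : (c:ℝ) = l - m := by exact_mod_cast hc
  constructor <;> linarith

lemma eta0u (l a c : ℕ) (m : ℤ) (ha : (a:ℤ) = l + m) (hc : (c:ℤ) = l - m) :
    eta ((l:ℤ)+1) m 0 = Real.sqrt (((a:ℝ)+1)*(c+1)/((a+c+1)*(a+c+3))) := by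
  obtain ⟨h1, h2⟩ := cast_l l a c m ha hc
  unfold _root_.eta kdZ
  congr 1
  push_cast
  rw [h1, h2]
  norm_num
  congr 1 <;> ring

lemma eta0d (l a c : ℕ) (m : ℤ) (ha : (a:ℤ) = l + m) (hc : (c:ℤ) = l - m) :
    eta (-(l:ℤ)) m 0 = Real.sqrt ((a:ℝ)*c/((a+c-1)*(a+c+1))) := by
  obtain ⟨h1, h2⟩ := cast_l l a c m ha hc
  unfold _root_.eta kdZ
  congr 1
  push_cast
  rw [h1, h2]
  norm_num
  congr 1 <;> ring

lemma etapu (l a c : ℕ) (m : ℤ) (ha : (a:ℤ) = l + m) (hc : (c:ℤ) = l - m) :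
    Real.sqrt 2 * eta ((l:ℤ)+1) m 1 =
    Real.sqrt (((a:ℝ)+1)*(a+2)/((a+c+1)*(a+c+3))) := by
  obtain ⟨h1, h2⟩ := cast_l l a c m ha hc
  unfold _root_.eta kdZ
  rw [← Real.sqrt_mul (by norm_num)]
  congr 1
  push_cast
  rw [h1, h2]
  norm_num
  rw [mul_assoc 2, ← mul_div_assoc, mul_div_mul_left _ _ (by norm_num)]
  congr 1 <;> ring

lemma etapd (l a c : ℕ) (m : ℤ) (ha : (a:ℤ) = l + m) (hc : (c:ℤ) = l - m) :
    Real.sqrt 2 * eta (-(l:ℤ)) m 1 =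
    Real.sqrt ((c:ℝ)*(c-1)/((a+c-1)*(a+c+1))) := by
  obtain ⟨h1, h2⟩ := cast_l l a c m ha hc
  unfold _root_.eta kdZ
  rw [← Real.sqrt_mul (by norm_num)]
  congr 1
  push_cast
  rw [h1, h2]
  norm_num
  rw [mul_assoc 2, ← mul_div_assoc, mul_div_mul_left _ _ (by norm_num)]
  congr 1 <;> ring

lemma etamu (l a c : ℕ) (m : ℤ) (ha : (a:ℤ) = l + m) (hc : (c:ℤ) = l - m) :
    Real.sqrt 2 * eta ((l:ℤ)+1) m (-1) =
    Real.sqrt (((c:ℝ)+1)*(c+2)/((a+c+1)*(a+c+3))) := by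
  obtain ⟨h1, h2⟩ := cast_l l a c m ha hc
  unfold _root_.eta kdZ
  rw [← Real.sqrt_mul (by norm_num)]
  congr 1
  push_cast
  rw [h1, h2]
  norm_num
  rw [mul_assoc 2, ← mul_div_assoc, mul_div_mul_left _ _ (by norm_num)]
  congr 1 <;> ring

lemma etamd (l a c : ℕ) (m : ℤ) (ha : (a:ℤ) = l + m) (hc : (c:ℤ) = l - m) :
    Real.sqrt 2 * eta (-(l:ℤ)) m (-1) =
    Real.sqrt ((a:ℝ)*(a-1)/((a+c-1)*(a+c+1))) := by
  obtain ⟨h1, h2⟩ := cast_l l a c m ha hc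
  unfold _root_.eta kdZ
  rw [← Real.sqrt_mul (by norm_num)]
  congr 1
  push_cast
  rw [h1, h2]
  norm_num
  rw [mul_assoc 2, ← mul_div_assoc, mul_div_mul_left _ _ (by norm_num)]
  congr 1 <;> ring


lemma Q_big (l n : ℕ) (h : 2 * l < n + 2) : D n (Q l) = 0 := by
  cases l with
  | zero => simp [Q, D]
  | succ l => exact D_big _ _ (by omega)

lemma get_ac (l : ℕ) (m : ℤ) (h : m.natAbs ≤ l) : ∃ a c : ℕ, (a:ℤ) = l + m ∧ (c:ℤ) = l - m :=
  ⟨((l:ℤ)+m).toNat, ((l:ℤ)-m).toNat, by omega, by omega⟩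

lemma eX (l : ℕ) (m : ℤ) (h : m.natAbs ≤ l) : X * e l m =
    C (eta ((l:ℤ)+1) m 0) * e ((l:ℤ)+1) m + C (eta (-(l:ℤ)) m 0) * e ((l:ℤ)-1) m := by
  obtain ⟨a, c, ha, hc⟩ := get_ac l m h
  have h2 : C (eta (-(l:ℤ)) m 0) * e ((l:ℤ)-1) m = C (N a c * (a/((a:ℝ)+c+1))) * D (a-1) (Q l) := by
    rcases Nat.eq_zero_or_pos a with h0 | h0
    · subst h0; rw [e_out _ _ (by omega)]; simp
    rcases Nat.eq_zero_or_pos c with h0' | h0'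
    · subst h0'; rw [e_out _ _ (by omega), Q_big _ _ (by omega)]; simp
    obtain ⟨a, rfl⟩ : ∃ a', a = a' + 1 := ⟨a-1, by omega⟩
    obtain ⟨c, rfl⟩ : ∃ a', c = a' + 1 := ⟨c-1, by omega⟩
    obtain ⟨l, rfl⟩ : ∃ a', l = a' + 1 := ⟨l-1, by omega⟩
    rw [e_mk _ m l a c (by push_cast; ring) (by push_cast at *; omega) (by push_cast at *; omega),
      eta0d _ _ _ _ ha hc, ← mul_assoc, ← C_mul]
    have := N2 a c
    simp only [Nat.add_sub_cancel, Q]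
    congr 2
    push_cast
    convert this.symm using 3
    · congr 1
      ring
    · ring
  rw [h2, e_mk (l+1) m (l+1) (a+1) (c+1) (by push_cast; ring) (by push_cast; omega) (by push_cast; omega),
    e_mk _ m l a c rfl ha hc, eta0u _ _ _ _ ha hc, ← mul_assoc (C (Real.sqrt _)), ← C_mul, ← N1, mul_left_comm,
    recX' l a c (by omega)]
  simp only [C_mul]; ring

lemma eU (l : ℕ) (m : ℤ) (h : m.natAbs ≤ l) : e l m =
    C (Real.sqrt 2 * eta ((l:ℤ)+1) m 1) * e ((l:ℤ)+1) (m+1)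
     - C (Real.sqrt 2 * eta (-(l:ℤ)) m 1) * e ((l:ℤ)-1) (m+1) := by
  obtain ⟨a, c, ha, hc⟩ := get_ac l m h
  have h2 : C (Real.sqrt 2 * eta (-(l:ℤ)) m 1) * e ((l:ℤ)-1) (m+1) =
      C (N a c * (1/((a:ℝ)+c+1))) * D a (Q l) := by
    rcases Nat.lt_or_ge c 2 with h0' | h0'
    · rw [e_out _ _ (by omega), Q_big _ _ (by omega)]; simp
    obtain ⟨c, rfl⟩ : ∃ a', c = a' + 2 := ⟨c-2, by omega⟩
    obtain ⟨l, rfl⟩ : ∃ a', l = a' + 1 := ⟨l-1, by omega⟩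
    rw [e_mk _ _ l a c (by push_cast; ring) (by push_cast at *; omega) (by push_cast at *; omega),
      etapd _ _ _ _ ha hc, ← mul_assoc, ← C_mul]
    have := N4 a c
    simp only [Q]
    congr 2
    push_cast
    convert this.symm using 3
    · congr 1 <;> ring
    · ring
  rw [h2, e_mk (l+1) (m+1) (l+1) (a+2) c (by push_cast; ring) (by push_cast; omega) (by push_cast; omega),
    e_mk _ m l a c rfl ha hc, etapu _ _ _ _ ha hc, ← mul_assoc, ← C_mul, ← N3,
    recU' l a c (by omega)]
  simp only [C_mul]; ring

lemma eD (l : ℕ) (m : ℤ) (h : m.natAbs ≤ l) : (1 - X^2) * e l m =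
    C (Real.sqrt 2 * eta (-(l:ℤ)) m (-1)) * e ((l:ℤ)-1) (m-1)
     - C (Real.sqrt 2 * eta ((l:ℤ)+1) m (-1)) * e ((l:ℤ)+1) (m-1) := by
  obtain ⟨a, c, ha, hc⟩ := get_ac l m h
  have h2 : C (Real.sqrt 2 * eta (-(l:ℤ)) m (-1)) * e ((l:ℤ)-1) (m-1) =
      C (N a c * ((a:ℝ)*(a-1)/((a:ℝ)+c+1))) * D (a-2) (Q l) := by
    rcases Nat.lt_or_ge a 2 with h0' | h0'
    · rw [e_out _ _ (by omega)]
      interval_cases a <;> simp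
    obtain ⟨a, rfl⟩ : ∃ a', a = a' + 2 := ⟨a-2, by omega⟩
    obtain ⟨l, rfl⟩ : ∃ a', l = a' + 1 := ⟨l-1, by omega⟩
    rw [e_mk _ _ l a c (by push_cast; ring) (by push_cast at *; omega) (by push_cast at *; omega),
      etamd _ _ _ _ ha hc, ← mul_assoc, ← C_mul]
    have := N6 a c
    simp only [Q, Nat.add_sub_cancel]
    congr 2
    push_cast
    convert this.symm using 3
    · congr 1 <;> ring
    · ring
    · ring
  rw [h2, e_mk (l+1) (m-1) (l+1) a (c+2) (by push_cast; ring) (by push_cast; omega) (by push_cast; omega),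
    e_mk _ m l a c rfl ha hc, etamu _ _ _ _ ha hc, ← mul_assoc (C (Real.sqrt _)), ← C_mul, ← N5,
    mul_left_comm, recD' l a c (by omega)]
  simp only [C_mul]; ring

lemma N_mul (a c : ℕ) : N a c * N c a = ((a:ℝ)+c+1)/2 := by
  unfold N
  rw [← Real.sqrt_mul (by positivity)]
  rw [Real.sqrt_eq_iff_mul_self_eq (by positivity) (by positivity)]
  field_simp
  ring

lemma eO (l l' m m' : ℤ) (hm : m = -m') (h : -l ≤ m ∧ m ≤ l) :
    J (e l m * e l' m') = if l = l' then (-1:ℝ)^m' else 0 := by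
  obtain ⟨L, rfl⟩ : ∃ n : ℕ, l = n := ⟨l.toNat, by omega⟩
  obtain ⟨a, c, ha, hc⟩ := get_ac L m (by omega)
  by_cases h' : -l' ≤ m' ∧ m' ≤ l'
  · obtain ⟨L', rfl⟩ : ∃ n : ℕ, l' = n := ⟨l'.toNat, by omega⟩
    obtain ⟨a', c', ha', hc'⟩ := get_ac L' m' (by omega)
    rw [e_mk _ _ L a c rfl ha hc, e_mk _ _ L' a' c' rfl ha' hc']
    rw [show C (N a c) * D a (R L) * (C (N a' c') * D a' (R L')) =
      C (N a c * N a' c') * (D a (R L) * D a' (R L')) by rw [C_mul]; ring, J_C,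
      orth _ _ _ _ (by omega)]
    by_cases e : L = L'
    · subst e
      rw [if_pos rfl, if_pos rfl]
      obtain rfl : a' = c := by omega
      obtain rfl : c' = a := by omega
      rw [N_mul]
      have e1 : (-1:ℝ)^m' = (-1)^(c'+L) := by
        rw [← zpow_natCast]
        have : ((c' + L : ℕ) : ℤ) = m' + 2 * (L - m') := by push_cast; omega
        rw [this, zpow_add₀ (by norm_num), zpow_mul]; norm_num
      rw [e1]
      obtain ⟨h1, h2⟩ := cast_l L _ _ m ha hc
      rw [h1]
      field_simp
    · rw [if_neg e, if_neg (by exact_mod_cast e)]; simp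
  · rw [e_out l' m' h', if_neg (by rintro rfl; omega)]; simp [J_zero]

lemma eO' (k : ℝ) (l l' m m' : ℤ) (hm : m = -m') (h : (-l ≤ m ∧ m ≤ l) ∨ k = 0) :
    k * J (e l m * e l' m') = k * if l = l' then (-1:ℝ)^m' else 0 := by
  rcases h with h | h
  · rw [eO _ _ _ _ hm h]
  · simp [h]

lemma J_four (A B a b : ℝ) (p q r s : Polynomial ℝ) :
    J ((C A * p - C B * q) * (C a * r + C b * s)) =
      a * (A * J (p * r)) - a * (B * J (q * r)) + b * (A * J (p * s)) - b * (B * J (q * s)) := by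
  have : (C A * p - C B * q) * (C a * r + C b * s) =
    C (a * A) * (p * r) + C (-(a * B)) * (q * r) + C (b * A) * (p * s) + C (-(b * B)) * (q * s) := by
    simp only [C_mul, C_neg]; ring
  rw [this]
  simp only [J_add, J_C]
  ring

lemma mainP (l1 l2 : ℕ) (m1 m2 : ℤ) (h1 : m1.natAbs ≤ l1) (h2 : m2.natAbs ≤ l2)
    (hm : m1 + 1 = -m2) : J (X * (e l1 m1 * e l2 m2)) = Real.sqrt 2 * (-1) ^ m2 *
    (eta ((l2:ℤ)+1) m2 0 * eta ((l1:ℤ)+1) m1 1 * (if (l1:ℤ)+1 = l2+1 then 1 else 0)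
     - eta ((l2:ℤ)+1) m2 0 * eta (-(l1:ℤ)) m1 1 * (if (l1:ℤ)-1 = l2+1 then 1 else 0)
     + eta (-(l2:ℤ)) m2 0 * eta ((l1:ℤ)+1) m1 1 * (if (l1:ℤ)+1 = l2-1 then 1 else 0)
     - eta (-(l2:ℤ)) m2 0 * eta (-(l1:ℤ)) m1 1 * (if (l1:ℤ)-1 = l2-1 then 1 else 0)) := by
  have hz : (-((l1:ℤ)-1) ≤ m1+1 ∧ m1+1 ≤ (l1:ℤ)-1) ∨ Real.sqrt 2 * eta (-(l1:ℤ)) m1 1 = 0 := by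
    obtain ⟨a, c, ha, hc⟩ := get_ac l1 m1 h1
    rcases Nat.lt_or_ge c 2 with h0 | h0
    · right
      rw [etapd _ _ _ _ ha hc]
      interval_cases c <;> simp
    · left; omega
  rw [mul_left_comm, eX l2 m2 h2, eU l1 m1 h1, J_four]
  rw [eO' _ _ _ _ _ hm (Or.inl (by omega)), eO' _ _ _ _ _ hm hz,
    eO' _ _ _ _ _ hm (Or.inl (by omega)), eO' _ _ _ _ _ hm hz]
  simp only [← mul_boole _ ((-1:ℝ)^m2)]
  ring

lemma mainM (l1 l2 : ℕ) (m1 m2 : ℤ) (h1 : m1.natAbs ≤ l1) (h2 : m2.natAbs ≤ l2)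
    (hm : m1 - 1 = -m2) : J (X * (1 - X^2) * (e l1 m1 * e l2 m2)) = - (Real.sqrt 2 * (-1) ^ m2 *
    (eta ((l2:ℤ)+1) m2 0 * eta ((l1:ℤ)+1) m1 (-1) * (if (l1:ℤ)+1 = l2+1 then 1 else 0)
     - eta ((l2:ℤ)+1) m2 0 * eta (-(l1:ℤ)) m1 (-1) * (if (l1:ℤ)-1 = l2+1 then 1 else 0)
     + eta (-(l2:ℤ)) m2 0 * eta ((l1:ℤ)+1) m1 (-1) * (if (l1:ℤ)+1 = l2-1 then 1 else 0)
     - eta (-(l2:ℤ)) m2 0 * eta (-(l1:ℤ)) m1 (-1) * (if (l1:ℤ)-1 = l2-1 then 1 else 0))) := by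
  have hz : (-((l1:ℤ)-1) ≤ m1-1 ∧ m1-1 ≤ (l1:ℤ)-1) ∨ Real.sqrt 2 * eta (-(l1:ℤ)) m1 (-1) = 0 := by
    obtain ⟨a, c, ha, hc⟩ := get_ac l1 m1 h1
    rcases Nat.lt_or_ge a 2 with h0 | h0
    · right
      rw [etamd _ _ _ _ ha hc]
      interval_cases a <;> simp
    · left; omega
  rw [show X * (1 - X^2) * (e l1 m1 * e l2 m2) = ((1 - X^2) * e l1 m1) * (X * e l2 m2) by ring,
    eX l2 m2 h2, eD l1 m1 h1, J_four]
  rw [eO' _ _ _ _ _ hm hz, eO' _ _ _ _ _ hm (Or.inl (by omega)),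
    eO' _ _ _ _ _ hm hz, eO' _ _ _ _ _ hm (Or.inl (by omega))]
  simp only [← mul_boole _ ((-1:ℝ)^m2)]
  ring

/-! Analysis part -/

lemma iterD (n : ℕ) (p : Polynomial ℝ) :
    iteratedDeriv n (fun x => p.eval x) = fun x => (D n p).eval x := by
  induction n with
  | zero => simp [D]
  | succ n ih =>
    rw [iteratedDeriv_succ, ih, D_succ]
    ext x
    exact Polynomial.deriv _

lemma harm (l : ℕ) (m : ℤ) (h : m.natAbs ≤ l) (θ φ : ℝ) (hθ : θ ∈ Set.Ioo 0 π) :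
    sphHarm l m ![Real.sin θ * Real.cos φ, Real.sin θ * Real.sin φ, Real.cos θ] =
      (((-1)^m * Real.sin θ ^ m * (e l m).eval (Real.cos θ) / Real.sqrt (2*π) : ℝ) : ℂ) *
        Complex.exp (Complex.I * m * φ) := by
  have hs : 0 < Real.sin θ := Real.sin_pos_of_mem_Ioo hθ
  obtain ⟨a, c, ha, hc⟩ := get_ac l m h
  unfold sphHarm
  simp only [Matrix.cons_val]
  congr 1
  · congr 1
    rw [← ha, ← hc, e_mk _ _ l a c rfl ha hc, eval_mul, eval_C, assocLegendre, ← ha]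
    simp only [Int.toNat_natCast]
    have e1 : (1 - Real.cos θ ^ 2) ^ ((m:ℝ)/2) = Real.sin θ ^ m := by
      rw [← Real.sin_sq, ← Real.rpow_natCast, ← Real.rpow_mul hs.le, ← Real.rpow_intCast]
      congr 1; push_cast; ring
    have e2 : Real.sqrt ((2 * l + 1) / (4 * π) * c.factorial / a.factorial)
        = N a c / Real.sqrt (2 * π) := by
      unfold N
      rw [← Real.sqrt_div (by positivity), (cast_l l a c m ha hc).1]
      congr 1
      field_simp
      ring
    have e3 : iteratedDeriv a (fun y : ℝ => (y^2-1)^l) (Real.cos θ) =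
        (2^l * l.factorial) * (D a (R l)).eval (Real.cos θ) := by
      have := congrFun (iterD a ((X^2-1)^l)) (Real.cos θ)
      simp only [eval_pow, eval_sub, eval_X, eval_one] at this
      rw [this]
      simp only [R, D, iterate_derivative_C_mul, eval_mul, eval_C]
      field_simp
    rw [e1, e2, e3]
    field_simp
  · set z : ℂ := ((Real.sin θ * Real.cos φ : ℝ) : ℂ) + ((Real.sin θ * Real.sin φ : ℝ) : ℂ) * Complex.I
      with hz
    have hz' : z = (Real.sin θ : ℂ) * Complex.exp (φ * Complex.I) := by
      rw [hz, Complex.exp_mul_I]; push_cast; ring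
    have hn : ‖z‖ = Real.sin θ := by
      rw [hz', norm_mul, Complex.norm_exp_ofReal_mul_I]
      rw [Complex.norm_real, Real.norm_eq_abs, abs_of_pos hs, mul_one]
    have hx := Complex.norm_mul_exp_arg_mul_I z
    rw [hn] at hx
    have hy : Complex.exp (Complex.arg z * Complex.I) = Complex.exp (φ * Complex.I) :=
      mul_left_cancel₀ (by exact_mod_cast hs.ne') (hx.trans hz')
    have key : ∀ t : ℝ, Complex.exp (Complex.I * m * t) = Complex.exp (t * Complex.I) ^ m := by
      intro t
      rw [← Complex.exp_int_mul]; congr 1; ring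
    rw [key, key, hy]

lemma int_exp (n : ℤ) : ∫ φ in (0:ℝ)..(2*π), Complex.exp (Complex.I * n * φ) =
    if n = 0 then 2 * (π:ℂ) else 0 := by
  split_ifs with h
  · subst h; simp
  · have h0 : Complex.I * (n:ℂ) ≠ 0 := mul_ne_zero Complex.I_ne_zero (by exact_mod_cast h)
    rw [integral_exp_mul_complex h0]
    have : Complex.exp (Complex.I * n * ((2*π : ℝ):ℂ)) = 1 := by
      rw [Complex.exp_eq_one_iff]; exact ⟨n, by push_cast; ring⟩
    rw [this]; simp

lemma int_cos (n : ℤ) : ∫ φ in (0:ℝ)..(2*π), (Real.cos φ : ℂ) * Complex.exp (Complex.I * n * φ) =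
    if n = 1 ∨ n = -1 then (π:ℂ) else 0 := by
  have : ∀ φ : ℝ, (Real.cos φ : ℂ) * Complex.exp (Complex.I * n * φ) =
      (1/2) * Complex.exp (Complex.I * ((n+1 : ℤ) : ℂ) * φ)
        + (1/2) * Complex.exp (Complex.I * ((n-1 : ℤ) : ℂ) * φ) := by
    intro φ
    rw [Complex.ofReal_cos, Complex.cos]
    have e1 : Complex.exp (Complex.I * ((n+1 : ℤ) : ℂ) * φ) =
      Complex.exp (φ * Complex.I) * Complex.exp (Complex.I * n * φ) := by
      rw [← Complex.exp_add]; congr 1; push_cast; ring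
    have e2 : Complex.exp (Complex.I * ((n-1 : ℤ) : ℂ) * φ) =
      Complex.exp (-φ * Complex.I) * Complex.exp (Complex.I * n * φ) := by
      rw [← Complex.exp_add]; congr 1; push_cast; ring
    rw [e1, e2]; ring
  simp only [this]
  rw [intervalIntegral.integral_add, intervalIntegral.integral_const_mul,
    intervalIntegral.integral_const_mul, int_exp, int_exp]
  · by_cases h1 : n = 1
    · subst h1; simp
    · by_cases h2 : n = -1
      · subst h2; simp
      · rw [if_neg (by omega), if_neg (by omega), if_neg (by omega)]; simp
  · exact Continuous.intervalIntegrable (by fun_prop) _ _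
  · exact Continuous.intervalIntegrable (by fun_prop) _ _

lemma J_theta (p : Polynomial ℝ) : ∫ θ in (0:ℝ)..π, p.eval (Real.cos θ) * Real.sin θ = J p := by
  have h := intervalIntegral.integral_comp_mul_deriv (a := 0) (b := π) (f := Real.cos)
    (f' := fun x => -Real.sin x) (g := fun x => p.eval x) (fun x _ => Real.hasDerivAt_cos x)
    (by fun_prop) p.continuous
  simp only [Function.comp, mul_neg, intervalIntegral.integral_neg, Real.cos_zero, Real.cos_pi] at h
  rw [intervalIntegral.integral_symm (-1) 1] at h
  unfold J
  linarith

lemma sphInt (l1 l2 : ℕ) (m1 m2 : ℤ) (h1 : m1.natAbs ≤ l1) (h2 : m2.natAbs ≤ l2) :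
    sphereIntegral (fun n => ((n 0 * n 2 : ℝ) : ℂ) * sphHarm l1 m1 n * sphHarm l2 m2 n) =
    ((∫ θ in (0:ℝ)..π, Real.sin θ ^ 2 * Real.cos θ * ((-1)^(m1+m2) * Real.sin θ ^ (m1+m2) *
      (e l1 m1 * e l2 m2).eval (Real.cos θ) / (2*π)) : ℝ) : ℂ) *
      (if m1 + m2 = 1 ∨ m1 + m2 = -1 then (π:ℂ) else 0) := by
  unfold sphereIntegral
  rw [← intervalIntegral.integral_ofReal, ← intervalIntegral.integral_mul_const]
  apply intervalIntegral.integral_congr_Ioo_of_le Real.pi_pos.le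
  intro θ hθ
  have hs : 0 < Real.sin θ := Real.sin_pos_of_mem_Ioo hθ
  simp only
  rw [← int_cos, ← intervalIntegral.integral_const_mul]
  congr 1
  ext φ
  rw [harm l1 m1 h1 θ φ hθ, harm l2 m2 h2 θ φ hθ]
  have ee : Complex.exp (Complex.I * ((m1+m2 : ℤ) : ℂ) * φ) =
      Complex.exp (Complex.I * m1 * φ) * Complex.exp (Complex.I * m2 * φ) := by
    rw [← Complex.exp_add]; congr 1; push_cast; ring
  rw [ee, zpow_add₀ (by norm_num : (-1:ℝ) ≠ 0), zpow_add₀ hs.ne', eval_mul]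
  have hq : (2 * π) = Real.sqrt (2*π) * Real.sqrt (2*π) := (Real.mul_self_sqrt (by positivity)).symm
  rw [show ∀ y : ℝ, y / (2 * π) = y / (Real.sqrt (2*π) * Real.sqrt (2*π)) by rw [← hq]; simp]
  simp only [Matrix.cons_val]
  push_cast
  field_simp

lemma sphP (l1 l2 : ℕ) (m1 m2 : ℤ) (h1 : m1.natAbs ≤ l1) (h2 : m2.natAbs ≤ l2)
    (hm : m1 + 1 = -m2) :
    sphereIntegral (fun n => ((n 0 * n 2 : ℝ) : ℂ) * sphHarm l1 m1 n * sphHarm l2 m2 n) =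
    ((-(1/2) * J (X * (e l1 m1 * e l2 m2)) : ℝ) : ℂ) := by
  rw [sphInt l1 l2 m1 m2 h1 h2, if_pos (by omega), ← Complex.ofReal_mul]
  congr 1
  rw [← J_theta, ← intervalIntegral.integral_mul_const, ← intervalIntegral.integral_const_mul]
  apply intervalIntegral.integral_congr_Ioo_of_le Real.pi_pos.le
  intro θ hθ
  have hs : 0 < Real.sin θ := Real.sin_pos_of_mem_Ioo hθ
  simp only [show m1 + m2 = -1 by omega, eval_mul, eval_X, zpow_neg_one]
  field_simp

lemma sphM (l1 l2 : ℕ) (m1 m2 : ℤ) (h1 : m1.natAbs ≤ l1) (h2 : m2.natAbs ≤ l2)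
    (hm : m1 - 1 = -m2) :
    sphereIntegral (fun n => ((n 0 * n 2 : ℝ) : ℂ) * sphHarm l1 m1 n * sphHarm l2 m2 n) =
    ((-(1/2) * J (X * (1 - X^2) * (e l1 m1 * e l2 m2)) : ℝ) : ℂ) := by
  rw [sphInt l1 l2 m1 m2 h1 h2, if_pos (by omega), ← Complex.ofReal_mul]
  congr 1
  rw [← J_theta, ← intervalIntegral.integral_mul_const, ← intervalIntegral.integral_const_mul]
  apply intervalIntegral.integral_congr_Ioo_of_le Real.pi_pos.le
  intro θ hθ
  simp only [show m1 + m2 = 1 by omega, eval_mul, eval_X, eval_sub, eval_one, eval_pow, zpow_one]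
  rw [← Real.sin_sq]
  field_simp

end F13

/-- explicit formula for F₁₃(l₁,m₁,l₂,m₂) = ∫_{S²} n₁n₃ Y_{l₁}^{m₁} Y_{l₂}^{m₂} dn. -/
theorem F13_explicit (l1 l2 : ℕ) (m1 m2 : ℤ) (h1 : m1.natAbs ≤ l1) (h2 : m2.natAbs ≤ l2) :
    sphereIntegral (fun n => ((n 0 * n 2 : ℝ) : ℂ) * sphHarm l1 m1 n * sphHarm l2 m2 n) =
      (((-1 : ℝ) ^ (m2 + 1) / Real.sqrt 2 *
        ∑ k ∈ Finset.range 2, ∑ j ∈ Finset.range 2, ∑ l ∈ Finset.range 2,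
          (-1 : ℝ) ^ (l + j) *
            eta ((if k = 0 then 1 else 0) + (-1) ^ k * l2) m2 0 *
            eta ((-1) ^ j * l1 + (if j = 0 then 1 else 0)) m1 ((-1) ^ l) *
            (if (l1 : ℤ) + (if k = 1 then 1 else 0) - (if j = 1 then 1 else 0) =
                (l2 : ℤ) - (if k = 1 then 1 else 0) + (if j = 1 then 1 else 0)
              then (1 : ℝ) else 0) *
            (if m1 + (-1) ^ l = -m2 then (1 : ℝ) else 0) : ℝ) : ℂ) := by
  have hsq : (1:ℝ) / Real.sqrt 2 = Real.sqrt 2 / 2 := by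
    rw [div_eq_div_iff (by positivity) (by norm_num)]; norm_num
  have hz : (-1:ℝ)^(m2+1) / Real.sqrt 2 = -((-1)^m2 * (Real.sqrt 2 / 2)) := by
    rw [zpow_add₀ (by norm_num), ← hsq, zpow_one]; ring
  by_cases hp : m1 + 1 = -m2
  · rw [F13.sphP l1 l2 m1 m2 h1 h2 hp, F13.mainP l1 l2 m1 m2 h1 h2 hp]
    congr 1
    have hq : ¬ (m1 + -1 = -m2) := by omega
    simp [Finset.sum_range_succ, hp, hq, hz, add_comm (1:ℤ)]
    split_ifs <;> ring
  by_cases hq : m1 - 1 = -m2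
  · rw [F13.sphM l1 l2 m1 m2 h1 h2 hq, F13.mainM l1 l2 m1 m2 h1 h2 hq]
    congr 1
    have hq' : m1 + -1 = -m2 := by omega
    simp [Finset.sum_range_succ, hp, hq', hz, add_comm (1:ℤ)]
    split_ifs <;> ring
  · rw [F13.sphInt l1 l2 m1 m2 h1 h2, if_neg (by omega)]
    have hq' : ¬ (m1 + -1 = -m2) := by omega
    simp [Finset.sum_range_succ, hp, hq']
end
end
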